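/- Let Γ ⊂ ℂ be a quasismooth Jordan curve. For every c > 0 there is a constant c′ > 0 depending only on Γ and c such that for all finite points z₁, z₂, z₃ in the closure of Ω, with t_j := Φ(z_j) (j = 1,2,3): if |z₁ − z₂| ≤ c |z₁ − z₃| then |t₁ − t₂| ≤ c′ |t₁ − t₃|, and if |t₁ − t₂| ≤ c |t₁ − t₃| then |z₁ − z₂| ≤ c′ |z₁ − z₃|. -/

import Mathlib

open MeasureTheory Metric Set Filter Bornology Complex
open scoped ENNReal NNReal Topology

noncomputable section

/-- `Γ` is a Jordan curve: the image of an injective continuous map of the unit circle. -/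
def IsJordanCurve (Γ : Set ℂ) : Prop :=
  ∃ γ : ℂ → ℂ, ContinuousOn γ (Metric.sphere (0:ℂ) 1) ∧
    Set.InjOn γ (Metric.sphere (0:ℂ) 1) ∧ Γ = γ '' (Metric.sphere (0:ℂ) 1)

/-- A (closed) subarc of `Γ`: a closed connected subset. -/
def IsSubarc (Γ J : Set ℂ) : Prop :=
  J ⊆ Γ ∧ IsClosed J ∧ IsPreconnected J

/-- `|Γ(z₁,z₂)|`: the length (1-dimensional Hausdorff measure) of the shorter subarc of `Γ`
joining `z₁` and `z₂`, described as the infimum of lengths of closed connected subsets of `Γ`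
containing both points. -/
def shorterArcLength (Γ : Set ℂ) (z₁ z₂ : ℂ) : ℝ≥0∞ :=
  ⨅ (J : Set ℂ) (_ : IsSubarc Γ J ∧ z₁ ∈ J ∧ z₂ ∈ J), μH[1] J

/-- `J` is (a realization of) the shorter arc `Γ(z₁,z₂)` of `Γ` between `z₁` and `z₂`. -/
def IsShorterArc (Γ : Set ℂ) (z₁ z₂ : ℂ) (J : Set ℂ) : Prop :=
  IsSubarc Γ J ∧ z₁ ∈ J ∧ z₂ ∈ J ∧ μH[1] J = shorterArcLength Γ z₁ z₂

/-- `Γ` is quasismooth (in the sense of Lavrentiev) with constant `Λ ≥ 1`: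
`|Γ(z₁,z₂)| ≤ Λ |z₁ - z₂|`. -/
def IsQuasismooth (Γ : Set ℂ) (Λ : ℝ) : Prop :=
  1 ≤ Λ ∧ ∀ z₁ ∈ Γ, ∀ z₂ ∈ Γ,
    shorterArcLength Γ z₁ z₂ ≤ ENNReal.ofReal (Λ * dist z₁ z₂)

/-- The union of the unbounded connected components of `Γᶜ`; for a Jordan curve `Γ` this is
the (unique) unbounded component `Ω` of the complement of `Γ`. -/
def unboundedComponent (Γ : Set ℂ) : Set ℂ :=
  {z | z ∉ Γ ∧ ¬ Bornology.IsBounded (connectedComponentIn Γᶜ z)}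

/-- `d(A,B) := inf {|z-ζ| : z ∈ A, ζ ∈ B}`. -/
def setDist (A B : Set ℂ) : ℝ := sInf (Set.image2 dist A B)

/-- The exterior `𝔻*` of the closed unit disk (finite part). -/
def extDisk : Set ℂ := {w : ℂ | 1 < ‖w‖}

/-- `Φ` is the conformal (holomorphic bijective) map of `Ω` onto `𝔻* = {|w| > 1}` normalized
by `Φ(∞) = ∞` and `Φ'(∞) := lim_{z→∞} Φ(z)/z > 0`. -/
def IsExtConformal (Ω : Set ℂ) (Φ : ℂ → ℂ) : Prop :=
  DifferentiableOn ℂ Φ Ω ∧ Set.BijOn Φ Ω extDisk ∧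
    ∃ c : ℝ, 0 < c ∧
      Filter.Tendsto (fun z => Φ z / z) (Bornology.cobounded ℂ) (nhds (c : ℂ))

/-- `Φ` additionally extends to a homeomorphism of `closure Ω` onto `{|w| ≥ 1}`. -/
def IsExtConformalClosure (Ω : Set ℂ) (Φ : ℂ → ℂ) : Prop :=
  IsExtConformal Ω Φ ∧ ContinuousOn Φ (closure Ω) ∧
    Set.BijOn Φ (closure Ω) {w : ℂ | 1 ≤ ‖w‖}

/-- The level curve `Γ_δ := {ζ ∈ Ω : |Φ(ζ)| = 1 + δ}`. -/
def levelCurve (Ω : Set ℂ) (Φ : ℂ → ℂ) (δ : ℝ) : Set ℂ :=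
  {ζ ∈ Ω | ‖Φ ζ‖ = 1 + δ}

/-- `ρ_δ(z) := d({z}, Γ_δ)`. -/
def rho (Ω : Set ℂ) (Φ : ℂ → ℂ) (δ : ℝ) (z : ℂ) : ℝ :=
  Metric.infDist z (levelCurve Ω Φ δ)

/-- `ν ∈ A∞(Γ)` with constant `lam ≥ 1`: `ν(J) ≤ lam · ν(S)` for every subarc `J ⊂ Γ` and
every Borel set `S ⊂ J` with `|J| ≤ 2|S|`. -/
def IsAInftyMeasure (Γ : Set ℂ) (ν : MeasureTheory.Measure ℂ) (lam : ℝ) : Prop :=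
  1 ≤ lam ∧ ∀ J S : Set ℂ, IsSubarc Γ J → S ⊆ J → MeasurableSet S →
    μH[1] J ≤ 2 * μH[1] S → ν J ≤ ENNReal.ofReal lam * ν S

theorem log_ratio_le_lintegral {F F' : ℝ → ℂ} {b a r R : ℝ} (w₀ : ℂ)
    (hF : ContinuousOn F (Icc b a)) (hd : ∀ φ ∈ Ioo b a, HasDerivAt F (F' φ) φ)
    (hr : 0 < r) (hrR : r < R) {φ₁ φ₂ : ℝ} (h₁ : φ₁ ∈ Icc b a) (h₂ : φ₂ ∈ Icc b a)
    (hF₁ : ‖F φ₁ - w₀‖ ≤ r) (hF₂ : R ≤ ‖F φ₂ - w₀‖) :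
    ENNReal.ofReal (Real.log (R / r)) ≤
      ∫⁻ φ in {φ | φ ∈ Ioo b a ∧ r < ‖F φ - w₀‖ ∧ ‖F φ - w₀‖ < R},
        ENNReal.ofReal (‖F' φ‖ / ‖F φ - w₀‖) := by
  set T : Set ℝ := {φ | φ ∈ Ioo b a ∧ r < ‖F φ - w₀‖ ∧ ‖F φ - w₀‖ < R} with hT
  set u : ℝ → ℝ := fun φ => ‖F φ - w₀‖ with hu
  have huc : ContinuousOn u (Icc b a) := (hF.sub continuousOn_const).norm
  have hTo : IsOpen T :=
    (huc.mono Ioo_subset_Icc_self).isOpen_inter_preimage isOpen_Ioo (isOpen_Ioo (a := r) (b := R))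
  set G : ℝ → ℝ := fun φ => Real.log (‖F φ - w₀‖ ^ 2) / 2 with hG
  set G' : ℝ → ℝ := fun φ => (2 * inner ℝ (F φ - w₀) (F' φ)) / ‖F φ - w₀‖ ^ 2 / 2 with hG'
  have hGd : ∀ φ ∈ T, HasDerivAt G (G' φ) φ := by
    intro φ hφ
    have hpos : 0 < ‖F φ - w₀‖ := hr.trans hφ.2.1
    have h1 : HasDerivAt (fun φ => F φ - w₀) (F' φ) φ := (hd φ hφ.1).sub_const w₀
    exact (h1.norm_sq.log (by simpa using hpos.ne')).div_const 2
  have hGu : ∀ φ, G φ = Real.log (u φ) := by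
    intro φ
    simp only [hG, hu, Real.log_pow]
    push_cast
    ring
  have key := addHaar_image_le_lintegral_abs_det_fderiv (μ := volume) hTo.measurableSet
    (fun φ hφ => ((hGd φ hφ).hasFDerivAt).hasFDerivWithinAt)
  have hsub : Ioo (Real.log r) (Real.log R) \ {Real.log (u b), Real.log (u a)} ⊆ G '' T := by
    rintro y ⟨⟨hy1, hy2⟩, hy3⟩
    have hey : Real.exp y ∈ Icc (u φ₁) (u φ₂) := by
      constructor
      · refine hF₁.trans ?_
        rw [← Real.log_le_iff_le_exp hr]; exact hy1.le
      · refine le_trans ?_ hF₂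
        rw [← Real.le_log_iff_exp_le (hr.trans hrR)]; exact hy2.le
    obtain ⟨φ, hφ, hφy⟩ := isPreconnected_Icc.intermediate_value h₁ h₂ huc hey
    have hly : Real.log (u φ) = y := by rw [hφy, Real.log_exp]
    refine ⟨φ, ⟨⟨lt_of_le_of_ne hφ.1 ?_, lt_of_le_of_ne hφ.2 ?_⟩, ?_, ?_⟩, by rw [hGu, hly]⟩
    · rintro rfl; exact hy3 (by simp [hly])
    · rintro rfl; exact hy3 (by simp [hly])
    · show r < u φ
      rw [hφy, ← Real.log_lt_iff_lt_exp hr]; exact hy1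
    · show u φ < R
      rw [hφy, ← Real.lt_log_iff_exp_lt (hr.trans hrR)]; exact hy2
  calc ENNReal.ofReal (Real.log (R / r))
      = volume (Ioo (Real.log r) (Real.log R) \ {Real.log (u b), Real.log (u a)}) := by
        rw [measure_sdiff_null ((Set.toFinite _).measure_zero _), Real.volume_Ioo,
          Real.log_div (hr.trans hrR).ne' hr.ne']
    _ ≤ volume (G '' T) := measure_mono hsub
    _ ≤ _ := key
    _ ≤ _ := by
        refine setLIntegral_mono' hTo.measurableSet fun φ hφ => ENNReal.ofReal_le_ofReal ?_
        have hpos : 0 < ‖F φ - w₀‖ := hr.trans hφ.2.1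
        rw [ContinuousLinearMap.det_toSpanSingleton]
        simp only [hG']
        rw [mul_div_assoc, mul_div_right_comm, div_self two_ne_zero, one_mul, abs_div,
          abs_of_nonneg (by positivity : (0:ℝ) ≤ ‖F φ - w₀‖ ^ 2), div_le_div_iff₀ (by positivity) hpos]
        have := abs_real_inner_le_norm (F φ - w₀) (F' φ)
        nlinarith

theorem det_restrictScalars_toSpanSingleton (z : ℂ) :
    ((ContinuousLinearMap.toSpanSingleton ℂ z).restrictScalars ℝ).det = ‖z‖ ^ 2 := by
  simp [ContinuousLinearMap.det, LinearMap.det_restrictScalars,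
      Algebra.norm_complex_eq, Complex.normSq_eq_norm_sq]

theorem lintegral_annulus_inv_sq_le {r R : ℝ} (hr : 0 < r) (hrR : r < R) (w₀ : ℂ) :
    ∫⁻ z, {z | r < ‖z - w₀‖ ∧ ‖z - w₀‖ < R}.indicator
      (fun z => ENNReal.ofReal (1 / ‖z - w₀‖ ^ 2)) z ≤
      ENNReal.ofReal (2 * Real.pi * Real.log (R / r)) := by
  have h0 : ∫⁻ z, {z | r < ‖z - w₀‖ ∧ ‖z - w₀‖ < R}.indicator
      (fun z => ENNReal.ofReal (1 / ‖z - w₀‖ ^ 2)) z =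
      ∫⁻ z : ℂ, {z : ℂ | r < ‖z‖ ∧ ‖z‖ < R}.indicator
      (fun z => ENNReal.ofReal (1 / ‖z‖ ^ 2)) z := by
    rw [← lintegral_sub_right_eq_self (fun z : ℂ => {z : ℂ | r < ‖z‖ ∧ ‖z‖ < R}.indicator
      (fun z => ENNReal.ofReal (1 / ‖z‖ ^ 2)) z) w₀]
    rfl
  have hmeas : Measurable (fun p : ℝ => (Ioo r R).indicator
      (fun p => ENNReal.ofReal (1 / p)) p) := by
    refine Measurable.indicator ?_ measurableSet_Ioo
    fun_prop
  rw [h0, ← Complex.lintegral_comp_polarCoord_symm]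
  calc
    _ = ∫⁻ p in polarCoord.target, (Ioo r R).indicator
      (fun p => ENNReal.ofReal (1 / p)) p.1 := by
        refine setLIntegral_congr_fun polarCoord.open_target.measurableSet fun p hp => ?_
        have hp1 : 0 < p.1 := hp.1
        simp only [indicator, mem_ofPred_eq, Complex.norm_polarCoord_symm, abs_of_pos hp1, mem_Ioo,
          smul_eq_mul]
        split_ifs
        · rw [← ENNReal.ofReal_mul hp1.le]
          congr 1
          field_simp
        · simp
    _ = ∫⁻ x in Ioi (0:ℝ), ∫⁻ y in Ioo (-Real.pi) Real.pi, (Ioo r R).indicator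
      (fun p => ENNReal.ofReal (1 / p)) x := by
        rw [polarCoord_target, Measure.volume_eq_prod,
          setLIntegral_prod (fun p : ℝ × ℝ => (Ioo r R).indicator
            (fun p => ENNReal.ofReal (1 / p)) p.1) (hmeas.comp measurable_fst).aemeasurable]
    _ = ∫⁻ x in Ioi (0:ℝ), ENNReal.ofReal (2 * Real.pi) * (Ioo r R).indicator
      (fun p => ENNReal.ofReal (1 / p)) x := by
        refine lintegral_congr fun x => ?_
        rw [lintegral_const, Measure.restrict_apply_univ, Real.volume_Ioo, mul_comm]
        congr 2; ring
    _ ≤ ∫⁻ x, ENNReal.ofReal (2 * Real.pi) * (Ioo r R).indicator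
      (fun p => ENNReal.ofReal (1 / p)) x := setLIntegral_le_lintegral _ _
    _ = ENNReal.ofReal (2 * Real.pi) * ∫⁻ x in Ioo r R, ENNReal.ofReal (1 / x) := by
        rw [lintegral_const_mul _ hmeas, lintegral_indicator measurableSet_Ioo]
    _ = ENNReal.ofReal (2 * Real.pi) * ENNReal.ofReal (Real.log (R / r)) := by
        rw [← integral_one_div_of_pos hr (hr.trans hrR), intervalIntegral.integral_of_le hrR.le,
          ofReal_integral_eq_lintegral_ofReal, restrict_Ioo_eq_restrict_Ioc]
        · change IntegrableOn (fun x : ℝ => 1 / x) (Ioc r R) volume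
          rw [← intervalIntegrable_iff_integrableOn_Ioc_of_le hrR.le]
          refine intervalIntegral.intervalIntegrable_one_div (fun x hx => ?_) continuousOn_id
          rw [uIcc_of_le hrR.le] at hx
          exact (hr.trans_le hx.1).ne'
        · filter_upwards [self_mem_ae_restrict measurableSet_Ioc] with x hx
          have : 0 < x := hr.trans hx.1
          simp only [Pi.zero_apply]; positivity
    _ = _ := by rw [← ENNReal.ofReal_mul (by positivity)]

/-- The density of the logarithmic length `|dz| / |z - w₀|` restricted to the annulus
`r < |z - w₀| < R`, pulled back by `f` from the set `1 < |x + w|`. -/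
def logLengthDensity (f : ℂ → ℂ) (x : ℝ) (w₀ : ℂ) (r R : ℝ) : ℂ → ℝ :=
  {w : ℂ | 1 < ‖(x : ℂ) + w‖ ∧ r < ‖f w - w₀‖ ∧ ‖f w - w₀‖ < R}.indicator
    fun w => ‖deriv f w‖ / ‖f w - w₀‖

section LengthArea

variable {f : ℂ → ℂ} {x r R : ℝ} {w₀ : ℂ}

theorem logLengthDensity_nonneg (w : ℂ) : 0 ≤ logLengthDensity f x w₀ r R w :=
  indicator_nonneg (fun _ _ => by positivity) _

theorem isOpen_one_lt_norm_add : IsOpen {w : ℂ | 1 < ‖(x : ℂ) + w‖} :=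
  isOpen_lt continuous_const (by fun_prop)

theorem isOpen_support_logLengthDensity (hd : DifferentiableOn ℂ f {w : ℂ | 1 < ‖(x : ℂ) + w‖}) :
    IsOpen {w : ℂ | 1 < ‖(x : ℂ) + w‖ ∧ r < ‖f w - w₀‖ ∧ ‖f w - w₀‖ < R} :=
  ((hd.continuousOn.sub continuousOn_const).norm).isOpen_inter_preimage
    isOpen_one_lt_norm_add (isOpen_Ioo (a := r) (b := R))

theorem measurable_logLengthDensity (hd : DifferentiableOn ℂ f {w : ℂ | 1 < ‖(x : ℂ) + w‖})
    (hr : 0 < r) : Measurable (logLengthDensity f x w₀ r R) := by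
  classical
  have hO := isOpen_support_logLengthDensity (w₀ := w₀) (r := r) (R := R) hd
  have hc : ContinuousOn (fun w => ‖deriv f w‖ / ‖f w - w₀‖)
      {w : ℂ | 1 < ‖(x : ℂ) + w‖ ∧ r < ‖f w - w₀‖ ∧ ‖f w - w₀‖ < R} := by
    refine ContinuousOn.div ?_ ?_ fun w hw => (hr.trans hw.2.1).ne'
    · exact ((hd.deriv isOpen_one_lt_norm_add).continuousOn.mono fun w hw => hw.1).norm
    · exact ((hd.continuousOn.mono fun w hw => hw.1).sub continuousOn_const).norm
  rw [logLengthDensity, ← piecewise_eq_indicator]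
  exact hc.measurable_piecewise continuousOn_const hO.measurableSet

theorem lintegral_logLengthDensity_sq_le
    (hd : DifferentiableOn ℂ f {w : ℂ | 1 < ‖(x : ℂ) + w‖})
    (hi : InjOn f {w : ℂ | 1 < ‖(x : ℂ) + w‖}) (hr : 0 < r) (hrR : r < R) :
    ∫⁻ w, ENNReal.ofReal (logLengthDensity f x w₀ r R w ^ 2) ≤
      ENNReal.ofReal (2 * Real.pi * Real.log (R / r)) := by
  set D : Set ℂ := {w : ℂ | 1 < ‖(x : ℂ) + w‖} with hD
  have hDo : IsOpen D := isOpen_one_lt_norm_add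
  have key := lintegral_image_eq_lintegral_abs_det_fderiv_mul volume hDo.measurableSet
    (fun w hw => (((hd.differentiableAt (hDo.mem_nhds hw)).hasDerivAt.hasFDerivAt).restrictScalars
      ℝ).hasFDerivWithinAt) hi ({z | r < ‖z - w₀‖ ∧ ‖z - w₀‖ < R}.indicator
      (fun z => ENNReal.ofReal (1 / ‖z - w₀‖ ^ 2)))
  calc
    _ = ∫⁻ w in D, ENNReal.ofReal
          |((ContinuousLinearMap.toSpanSingleton ℂ (deriv f w)).restrictScalars ℝ).det| *
          {z | r < ‖z - w₀‖ ∧ ‖z - w₀‖ < R}.indicator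
          (fun z => ENNReal.ofReal (1 / ‖z - w₀‖ ^ 2)) (f w) := by
        rw [← lintegral_indicator hDo.measurableSet]
        refine lintegral_congr fun w => ?_
        simp only [logLengthDensity, indicator, hD, mem_ofPred_eq,
          det_restrictScalars_toSpanSingleton, abs_pow, abs_norm]
        by_cases h1 : 1 < ‖(x : ℂ) + w‖
        · by_cases h2 : r < ‖f w - w₀‖ ∧ ‖f w - w₀‖ < R
          · rw [if_pos ⟨h1, h2⟩, if_pos h1, if_pos h2, ← ENNReal.ofReal_mul (by positivity)]
            congr 1
            rw [div_pow]; ring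
          · rw [if_neg fun h => h2 h.2, if_pos h1, if_neg h2]; simp
        · rw [if_neg fun h => h1 h.1, if_neg h1]; simp
    _ ≤ _ := by
        rw [← key]
        exact (setLIntegral_le_lintegral _ _).trans (lintegral_annulus_inv_sq_le hr hrR w₀)

theorem norm_ofReal_add_polarCoord_symm_sq (s φ : ℝ) :
    ‖(x : ℂ) + Complex.polarCoord.symm (s, φ)‖ ^ 2 = x ^ 2 + s ^ 2 + 2 * x * s * Real.cos φ := by
  rw [Complex.polarCoord_symm_apply, ← Complex.normSq_eq_norm_sq, Complex.normSq_apply]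
  simp [-Complex.ofReal_cos, -Complex.ofReal_sin]
  have := Real.sin_sq_add_cos_sq φ
  linear_combination s ^ 2 * this

theorem log_ratio_le_lintegral_circle (hx : 1 ≤ x)
    (hc : ContinuousOn f {w : ℂ | 1 ≤ ‖(x : ℂ) + w‖})
    (hd : DifferentiableOn ℂ f {w : ℂ | 1 < ‖(x : ℂ) + w‖})
    (hr : 0 < r) (hrR : r < R) {s : ℝ} (hs : 0 < s) {t t' : ℂ} (ht : ‖t‖ = s) (ht' : ‖t'‖ = s)
    (htD : 1 ≤ ‖(x : ℂ) + t‖) (htD' : 1 ≤ ‖(x : ℂ) + t'‖)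
    (hft : ‖f t - w₀‖ ≤ r) (hft' : R ≤ ‖f t' - w₀‖) :
    ENNReal.ofReal (Real.log (R / r)) ≤ ∫⁻ φ in Ioo (-Real.pi) Real.pi,
      ENNReal.ofReal s * ENNReal.ofReal
        (logLengthDensity f x w₀ r R (Complex.polarCoord.symm (s, φ))) := by
  have hx0 : 0 < x := by linarith
  set k : ℝ := (1 - x ^ 2 - s ^ 2) / (2 * x * s) with hk
  have hk0 : k ≤ 0 := div_nonpos_of_nonpos_of_nonneg (by nlinarith) (by positivity)
  set p : ℝ → ℂ := fun φ => Complex.polarCoord.symm (s, φ) with hp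
  have hpe : ∀ φ, p φ = s * Complex.exp (φ * Complex.I) := by
    intro φ
    simp only [hp, Complex.polarCoord_symm_apply]
    rw [Complex.exp_mul_I, Complex.ofReal_cos, Complex.ofReal_sin]
  have hge : ∀ φ, 1 ≤ ‖(x : ℂ) + p φ‖ ↔ k ≤ Real.cos φ := by
    intro φ
    rw [← one_le_sq_iff₀ (norm_nonneg _), norm_ofReal_add_polarCoord_symm_sq, hk,
      div_le_iff₀ (by positivity)]
    constructor <;> intro h <;> linarith
  have hgt : ∀ φ, 1 < ‖(x : ℂ) + p φ‖ ↔ k < Real.cos φ := by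
    intro φ
    rw [← one_lt_sq_iff₀ (norm_nonneg _), norm_ofReal_add_polarCoord_symm_sq, hk,
      div_lt_iff₀ (by positivity)]
    constructor <;> intro h <;> linarith
  set a : ℝ := Real.arccos k with ha
  have haπ : a ≤ Real.pi := Real.arccos_le_pi k
  have hka : k ≤ Real.cos a := by
    rcases le_total (-1) k with h | h
    · rw [ha, Real.cos_arccos h (by linarith)]
    · exact h.trans (Real.neg_one_le_cos _)
  have hmem : ∀ φ ∈ Icc (-a) a, 1 ≤ ‖(x : ℂ) + p φ‖ := by
    intro φ hφ
    rw [hge, ← Real.cos_abs]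
    exact hka.trans (Real.cos_le_cos_of_nonneg_of_le_pi (abs_nonneg _) haπ (abs_le.2 hφ))
  have hmem' : ∀ φ ∈ Ioo (-a) a, 1 < ‖(x : ℂ) + p φ‖ := by
    intro φ hφ
    rw [hgt, ← Real.cos_abs]
    exact hka.trans_lt (Real.cos_lt_cos_of_nonneg_of_le_pi (abs_nonneg _) haπ (abs_lt.2 hφ))
  have harc : ∀ t : ℂ, ‖t‖ = s → 1 ≤ ‖(x : ℂ) + t‖ → ∃ φ ∈ Icc (-a) a, p φ = t := by
    intro t ht htD
    have hpt : p t.arg = t := by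
      rw [hpe, ← ht]; exact Complex.norm_mul_exp_arg_mul_I t
    refine ⟨t.arg, abs_le.1 ?_, hpt⟩
    rw [← hpt, hge, ← Real.cos_abs] at htD
    rw [ha, ← Real.arccos_cos (abs_nonneg t.arg) (Complex.abs_arg_le_pi t)]
    exact Real.arccos_le_arccos htD
  obtain ⟨φ₁, hφ₁, rfl⟩ := harc t ht htD
  obtain ⟨φ₂, hφ₂, rfl⟩ := harc t' ht' htD'
  have hpd : ∀ φ, HasDerivAt p (p φ * Complex.I) φ := by
    intro φ
    have h1 : HasDerivAt (fun φ : ℝ => (φ : ℂ) * Complex.I) Complex.I φ := by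
      simpa using (Complex.ofRealCLM.hasDerivAt (x := φ)).mul_const Complex.I
    have h2 := (h1.cexp).const_mul (s : ℂ)
    have h3 : p = fun φ : ℝ => (s : ℂ) * Complex.exp (φ * Complex.I) := funext hpe
    have h4 : HasDerivAt p (s * (Complex.exp (φ * Complex.I) * Complex.I)) φ := by
      rw [h3]; exact h2
    rwa [← mul_assoc, ← hpe] at h4
  have hpc : Continuous p := continuous_iff_continuousAt.2 fun φ => (hpd φ).continuousAt
  have hpn : ∀ φ, ‖p φ‖ = s := by
    intro φ
    rw [hpe, norm_mul, Complex.norm_exp_ofReal_mul_I, Complex.norm_of_nonneg hs.le, mul_one]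
  have hFd : ∀ φ ∈ Ioo (-a) a, HasDerivAt (f ∘ p) (deriv f (p φ) * (p φ * Complex.I)) φ := by
    intro φ hφ
    have h1 := (hd.differentiableAt (isOpen_one_lt_norm_add.mem_nhds (hmem' φ hφ))).hasDerivAt
    have h2 := (h1.hasFDerivAt.restrictScalars ℝ).comp_hasDerivAt φ (hpd φ)
    simpa [mul_comm] using h2
  have key := log_ratio_le_lintegral w₀ (F := f ∘ p) (hc.comp hpc.continuousOn hmem) hFd hr hrR
    hφ₁ hφ₂ hft hft'
  refine key.trans ?_
  refine le_trans (le_of_eq ?_) (lintegral_mono_set (s := {φ | φ ∈ Ioo (-a) a ∧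
    r < ‖f (p φ) - w₀‖ ∧ ‖f (p φ) - w₀‖ < R}) fun φ hφ =>
    ⟨(neg_le_neg haπ).trans_lt hφ.1.1, hφ.1.2.trans_le haπ⟩)
  have hTm : MeasurableSet {φ | φ ∈ Ioo (-a) a ∧
      r < ‖f (p φ) - w₀‖ ∧ ‖f (p φ) - w₀‖ < R} := by
    have : ContinuousOn (fun φ => ‖f (p φ) - w₀‖) (Ioo (-a) a) :=
      (((hc.comp hpc.continuousOn hmem).mono Ioo_subset_Icc_self).sub continuousOn_const).norm
    exact (this.isOpen_inter_preimage isOpen_Ioo (isOpen_Ioo (a := r) (b := R))).measurableSet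
  refine setLIntegral_congr_fun hTm fun φ hφ => ?_
  rw [← ENNReal.ofReal_mul hs.le]
  have : logLengthDensity f x w₀ r R (p φ) = ‖deriv f (p φ)‖ / ‖f (p φ) - w₀‖ :=
    indicator_of_mem (s := {w : ℂ | 1 < ‖(x : ℂ) + w‖ ∧ r < ‖f w - w₀‖ ∧ ‖f w - w₀‖ < R})
      ⟨hmem' φ hφ.1, hφ.2⟩ _
  change _ = ENNReal.ofReal (s * logLengthDensity f x w₀ r R (p φ))
  rw [this, norm_mul, norm_mul, hpn, Complex.norm_I]
  congr 1
  simp only [Function.comp]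
  ring

theorem log_sq_div_le_lintegral_circle {s L : ℝ} (hs : 0 < s) (hL : 0 ≤ L)
    (hd : DifferentiableOn ℂ f {w : ℂ | 1 < ‖(x : ℂ) + w‖}) (hr : 0 < r)
    (h : ENNReal.ofReal L ≤ ∫⁻ φ in Ioo (-Real.pi) Real.pi,
      ENNReal.ofReal s * ENNReal.ofReal
        (logLengthDensity f x w₀ r R (Complex.polarCoord.symm (s, φ)))) :
    ENNReal.ofReal (L ^ 2 / (2 * Real.pi) * (1 / s)) ≤ ∫⁻ φ in Ioo (-Real.pi) Real.pi,
      ENNReal.ofReal s * ENNReal.ofReal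
        (logLengthDensity f x w₀ r R (Complex.polarCoord.symm (s, φ)) ^ 2) := by
  set g : ℝ → ℝ := fun φ => logLengthDensity f x w₀ r R (Complex.polarCoord.symm (s, φ)) with hg
  have hg0 : ∀ φ, 0 ≤ g φ := fun φ => logLengthDensity_nonneg _
  have hgm : Measurable g := by
    refine (measurable_logLengthDensity hd hr).comp ?_
    simp only [Complex.polarCoord_symm_apply]
    fun_prop
  have hπ := Real.pi_pos
  set c : ℝ := L / (2 * Real.pi * s) with hc
  have hc0 : 0 ≤ c := by positivity
  have hpt : ∀ φ, ENNReal.ofReal (2 * c) * (ENNReal.ofReal s * ENNReal.ofReal (g φ)) ≤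
      ENNReal.ofReal s * ENNReal.ofReal (g φ ^ 2) + ENNReal.ofReal (s * c ^ 2) := by
    intro φ
    rw [← ENNReal.ofReal_mul hs.le, ← ENNReal.ofReal_mul (by positivity),
      ← ENNReal.ofReal_mul hs.le, ← ENNReal.ofReal_add
      (mul_nonneg hs.le (sq_nonneg _)) (by positivity)]
    refine ENNReal.ofReal_le_ofReal ?_
    nlinarith [mul_nonneg hs.le (sq_nonneg (g φ - c))]
  have hint := lintegral_mono (μ := volume.restrict (Ioo (-Real.pi) Real.pi)) hpt
  rw [lintegral_const_mul _ (by fun_prop), lintegral_add_right _ measurable_const, lintegral_const,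
    Measure.restrict_apply_univ, Real.volume_Ioo] at hint
  have h2 := (mul_le_mul_right h (ENNReal.ofReal (2 * c))).trans hint
  rw [← ENNReal.ofReal_mul (by positivity), ← ENNReal.ofReal_mul (by positivity)] at h2
  have h3 : ENNReal.ofReal (2 * c * L) = ENNReal.ofReal (L ^ 2 / (2 * Real.pi) * (1 / s)) +
      ENNReal.ofReal (s * c ^ 2 * (Real.pi - -Real.pi)) := by
    rw [← ENNReal.ofReal_add (by positivity) (by rw [sub_neg_eq_add]; positivity)]
    congr 1
    rw [hc]; field_simp; ring
  rw [h3] at h2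
  exact (ENNReal.add_le_add_iff_right ENNReal.ofReal_ne_top).1 h2

theorem log_mul_log_le_of_real (hx : 1 ≤ x)
    (hc : ContinuousOn f {w : ℂ | 1 ≤ ‖(x : ℂ) + w‖})
    (hd : DifferentiableOn ℂ f {w : ℂ | 1 < ‖(x : ℂ) + w‖})
    (hi : InjOn f {w : ℂ | 1 < ‖(x : ℂ) + w‖})
    (hr : 0 < r) (hrR : r < R) {s₁ s₂ : ℝ} (hs : 0 < s₁) (hs₁₂ : s₁ < s₂)
    (h₁ : ∀ s ∈ Ioo s₁ s₂, ∃ t, ‖t‖ = s ∧ 1 ≤ ‖(x : ℂ) + t‖ ∧ ‖f t - w₀‖ ≤ r)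
    (h₂ : ∀ s ∈ Ioo s₁ s₂, ∃ t, ‖t‖ = s ∧ 1 ≤ ‖(x : ℂ) + t‖ ∧ R ≤ ‖f t - w₀‖) :
    Real.log (s₂ / s₁) * Real.log (R / r) ≤ 4 * Real.pi ^ 2 := by
  have hπ := Real.pi_pos
  set L : ℝ := Real.log (R / r) with hL
  have hL0 : 0 < L := Real.log_pos (by rwa [one_lt_div hr])
  have harea := lintegral_logLengthDensity_sq_le (w₀ := w₀) hd hi hr hrR
  rw [← Complex.lintegral_comp_polarCoord_symm] at harea
  set q : ℝ × ℝ → ℝ≥0∞ := fun p => ENNReal.ofReal p.1 * ENNReal.ofReal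
    (logLengthDensity f x w₀ r R (Complex.polarCoord.symm p) ^ 2) with hq
  have hqm : Measurable q := by
    have h1 : Measurable fun p : ℝ × ℝ => Complex.polarCoord.symm p := by
      simp only [Complex.polarCoord_symm_apply]; fun_prop
    have h2 := (measurable_logLengthDensity (w₀ := w₀) (R := R) hd hr).comp h1
    exact (ENNReal.measurable_ofReal.comp measurable_fst).mul
      (ENNReal.measurable_ofReal.comp (h2.pow_const 2))
  have h3 : ∫⁻ s in Ioo s₁ s₂, ENNReal.ofReal (L ^ 2 / (2 * Real.pi) * (1 / s)) ≤
      ENNReal.ofReal (2 * Real.pi * L) := by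
    refine le_trans ?_ harea
    change _ ≤ ∫⁻ p in polarCoord.target, q p
    rw [polarCoord_target, Measure.volume_eq_prod, setLIntegral_prod q hqm.aemeasurable]
    refine le_trans ?_ (lintegral_mono_set (s := Ioo s₁ s₂) fun s h => hs.trans h.1)
    refine setLIntegral_mono' measurableSet_Ioo fun s h => ?_
    have hs0 : 0 < s := hs.trans h.1
    obtain ⟨t, ht, htD, hft⟩ := h₁ s h
    obtain ⟨t', ht', htD', hft'⟩ := h₂ s h
    exact log_sq_div_le_lintegral_circle hs0 hL0.le hd hr
      (log_ratio_le_lintegral_circle hx hc hd hr hrR hs0 ht ht' htD htD' hft hft')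
  have h4 : ∫⁻ s in Ioo s₁ s₂, ENNReal.ofReal (L ^ 2 / (2 * Real.pi) * (1 / s)) =
      ENNReal.ofReal (L ^ 2 / (2 * Real.pi) * Real.log (s₂ / s₁)) := by
    rw [← integral_one_div_of_pos hs (hs.trans hs₁₂), ← intervalIntegral.integral_const_mul,
      intervalIntegral.integral_of_le hs₁₂.le,
      ofReal_integral_eq_lintegral_ofReal, restrict_Ioo_eq_restrict_Ioc]
    · change IntegrableOn (fun x : ℝ => L ^ 2 / (2 * Real.pi) * (1 / x)) (Ioc s₁ s₂) volume
      rw [← intervalIntegrable_iff_integrableOn_Ioc_of_le hs₁₂.le]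
      refine IntervalIntegrable.const_mul
        (intervalIntegral.intervalIntegrable_one_div (fun x hx => ?_) continuousOn_id) _
      rw [uIcc_of_le hs₁₂.le] at hx
      exact (hs.trans_le hx.1).ne'
    · filter_upwards [self_mem_ae_restrict measurableSet_Ioc] with x hx
      have : 0 < x := hs.trans hx.1
      simp only [Pi.zero_apply]; positivity
  rw [h4, ENNReal.ofReal_le_ofReal_iff (by positivity)] at h3
  have h5 : L * (Real.log (s₂ / s₁) * L) ≤ L * (4 * Real.pi ^ 2) := by
    have h6 : L ^ 2 / (2 * Real.pi) * Real.log (s₂ / s₁) * (2 * Real.pi) =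
      L * (Real.log (s₂ / s₁) * L) := by field_simp
    rw [← h6]
    nlinarith [mul_le_mul_of_nonneg_right h3 (by positivity : 0 ≤ 2 * Real.pi)]
  exact le_of_mul_le_mul_left h5 hL0

end LengthArea

/-- The length-area inequality on the exterior of the unit disk. -/
theorem log_mul_log_le {f : ℂ → ℂ} (hc : ContinuousOn f {w : ℂ | 1 ≤ ‖w‖})
    (hd : DifferentiableOn ℂ f extDisk) (hi : InjOn f extDisk)
    {t₁ w₀ : ℂ} (ht₁ : 1 ≤ ‖t₁‖) {r R s₁ s₂ : ℝ}
    (hr : 0 < r) (hrR : r < R) (hs : 0 < s₁) (hs₁₂ : s₁ < s₂)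
    (h₁ : ∀ s ∈ Ioo s₁ s₂, ∃ t, dist t t₁ = s ∧ 1 ≤ ‖t‖ ∧ ‖f t - w₀‖ ≤ r)
    (h₂ : ∀ s ∈ Ioo s₁ s₂, ∃ t, dist t t₁ = s ∧ 1 ≤ ‖t‖ ∧ R ≤ ‖f t - w₀‖) :
    Real.log (s₂ / s₁) * Real.log (R / r) ≤ 4 * Real.pi ^ 2 := by
  set u : ℂ := Complex.exp (t₁.arg * Complex.I) with hu
  have hun : ‖u‖ = 1 := Complex.norm_exp_ofReal_mul_I _
  have hu0 : u ≠ 0 := norm_ne_zero_iff.1 (by rw [hun]; exact one_ne_zero)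
  set x : ℝ := ‖t₁‖ with hx
  have hxu : u * x = t₁ := by rw [mul_comm]; exact Complex.norm_mul_exp_arg_mul_I t₁
  set m : ℂ → ℂ := fun w => u * (x + w) with hm
  have hmn : ∀ w, ‖m w‖ = ‖(x : ℂ) + w‖ := fun w => by rw [hm]; simp only [norm_mul, hun, one_mul]
  have hmd : Differentiable ℂ m := by intro w; simp only [hm]; fun_prop
  have hmi : Function.Injective m := fun w w' h => by
    simpa [hm, hu0] using h
  have hback : ∀ t, ∃ w, m w = t ∧ ‖w‖ = dist t t₁ := by
    intro t
    have h1 : m (u⁻¹ * t - x) = t := by simp only [hm]; field_simp; ring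
    refine ⟨u⁻¹ * t - x, h1, ?_⟩
    rw [dist_eq_norm, ← hxu]
    have h2 : t - u * x = u * (u⁻¹ * t - x) := by field_simp
    rw [h2, norm_mul, hun, one_mul]
  have htrans : ∀ P : ℂ → Prop, (∀ s ∈ Ioo s₁ s₂, ∃ t, dist t t₁ = s ∧ 1 ≤ ‖t‖ ∧ P (f t)) →
      ∀ s ∈ Ioo s₁ s₂, ∃ t, ‖t‖ = s ∧ 1 ≤ ‖(x : ℂ) + t‖ ∧ P ((f ∘ m) t) := by
    intro P h s hs
    obtain ⟨t, h1, h2, h3⟩ := h s hs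
    obtain ⟨w, rfl, hw⟩ := hback t
    exact ⟨w, hw.trans h1, by rwa [← hmn], h3⟩
  refine log_mul_log_le_of_real (f := f ∘ m) (w₀ := w₀) ht₁ (hc.comp hmd.continuous.continuousOn ?_)
    (hd.comp hmd.differentiableOn ?_) (hi.comp hmi.injOn ?_) hr hrR hs hs₁₂
    (htrans (fun z => ‖z - w₀‖ ≤ r) h₁) (htrans (fun z => R ≤ ‖z - w₀‖) h₂)
  · intro w hw; show 1 ≤ ‖m w‖; rw [hmn]; exact hw
  · intro w hw; show 1 < ‖m w‖; rw [hmn]; exact hw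
  · intro w hw; show 1 < ‖m w‖; rw [hmn]; exact hw

section UnboundedComponent

variable {Γ S : Set ℂ} {z : ℂ}

theorem subset_unboundedComponent_of_isPreconnected (hS : IsPreconnected S) (hSΓ : S ⊆ Γᶜ)
    (hz : z ∈ S) (hzΩ : z ∈ unboundedComponent Γ) : S ⊆ unboundedComponent Γ := by
  intro y hy
  have h := hS.subset_connectedComponentIn hz hSΓ hy
  refine ⟨hSΓ hy, ?_⟩
  rw [← connectedComponentIn_eq h]
  exact hzΩ.2

theorem subset_unboundedComponent_of_not_isBounded (hS : IsPreconnected S) (hSΓ : S ⊆ Γᶜ)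
    (hb : ¬ IsBounded S) : S ⊆ unboundedComponent Γ := fun _ hy =>
  ⟨hSΓ hy, fun h => hb (h.subset (hS.subset_connectedComponentIn hy hSΓ))⟩

theorem mem_unboundedComponent_of_mem_closure (hΓ : IsClosed Γ)
    (hz : z ∈ closure (unboundedComponent Γ)) (hzΓ : z ∉ Γ) : z ∈ unboundedComponent Γ := by
  obtain ⟨ε, hε, hb⟩ := Metric.isOpen_iff.1 hΓ.isOpen_compl z hzΓ
  obtain ⟨y, hy, hzy⟩ := Metric.mem_closure_iff.1 hz ε hε
  exact subset_unboundedComponent_of_isPreconnected (convex_ball z ε).isPreconnected hb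
    (mem_ball'.2 hzy) hy (mem_ball_self hε)

theorem isOpen_unboundedComponent (hΓ : IsClosed Γ) : IsOpen (unboundedComponent Γ) := by
  refine Metric.isOpen_iff.2 fun z hz => ?_
  obtain ⟨ε, hε, hb⟩ := Metric.isOpen_iff.1 hΓ.isOpen_compl z hz.1
  exact ⟨ε, hε, subset_unboundedComponent_of_isPreconnected (convex_ball z ε).isPreconnected hb
    (mem_ball_self hε) hz⟩

theorem eventually_mem_unboundedComponent (hΓ : IsBounded Γ) :
    ∀ᶠ z in cobounded ℂ, z ∈ unboundedComponent Γ := by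
  obtain ⟨B, hB⟩ := hΓ.subset_closedBall 0
  filter_upwards [tendsto_norm_cobounded_atTop.eventually (eventually_gt_atTop (max B 0))]
    with z hz
  have hz0 : 0 < ‖z‖ := (le_max_right _ _).trans_lt hz
  have hzB : B < ‖z‖ := (le_max_left _ _).trans_lt hz
  have hn : ∀ s ∈ Ici (1 : ℝ), ‖(s : ℂ) * z‖ = s * ‖z‖ := fun s hs => by
    rw [norm_mul, Complex.norm_of_nonneg (zero_le_one.trans hs)]
  refine subset_unboundedComponent_of_not_isBounded (S := (fun s : ℝ => (s : ℂ) * z) '' Ici 1)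
    ((isPreconnected_Ici).image _ (by fun_prop)) ?_ ?_ ⟨1, mem_Ici.2 le_rfl, by simp⟩
  · rintro _ ⟨s, hs, rfl⟩ hmem
    have h1 := mem_closedBall_zero_iff.1 (hB hmem)
    simp only [hn s hs] at h1
    nlinarith [mem_Ici.1 hs]
  · intro hb
    obtain ⟨M, hM⟩ := hb.exists_norm_le
    have hs : max 1 ((M + 1) / ‖z‖) ∈ Ici (1 : ℝ) := mem_Ici.2 (le_max_left _ _)
    have h1 := hM _ ⟨_, hs, rfl⟩
    simp only [hn _ hs] at h1
    have h2 := mul_le_mul_of_nonneg_right (le_max_right 1 ((M + 1) / ‖z‖)) hz0.le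
    rw [div_mul_cancel₀ _ hz0.ne'] at h2
    linarith

end UnboundedComponent

theorem continuousOn_of_rightInvOn {A D : Set ℂ} {f g : ℂ → ℂ} (hA : IsClosed A)
    (hf : ContinuousOn f A) (hi : InjOn f A) (hg : MapsTo g D A) (hfg : RightInvOn g f D)
    (hb : ∀ t ∈ D, ∃ M, ∀ᶠ s in 𝓝[D] t, ‖g s‖ ≤ M) : ContinuousOn g D := by
  intro t ht
  obtain ⟨M, hM⟩ := hb t ht
  have hK : IsCompact (A ∩ closedBall 0 M) := (isCompact_closedBall 0 M).inter_left hA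
  refine hK.tendsto_nhds_of_unique_mapClusterPt ?_ fun y hy hcl => ?_
  · filter_upwards [hM, self_mem_nhdsWithin] with s hs hsD
    exact ⟨hg hsD, mem_closedBall_zero_iff.2 hs⟩
  · obtain ⟨U, hU, hUy⟩ := mapClusterPt_iff_ultrafilter.1 hcl
    have hD : ∀ᶠ s in (U : Filter ℂ), s ∈ D := hU self_mem_nhdsWithin
    have h1 : Tendsto g U (𝓝[A] y) :=
      tendsto_nhdsWithin_iff.2 ⟨hUy, hD.mono fun s hs => hg hs⟩
    have h2 : Tendsto (f ∘ g) U (𝓝 (f y)) := (hf y hy.1).tendsto.comp h1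
    have h3 : Tendsto (f ∘ g) U (𝓝 t) :=
      (tendsto_id.mono_left (hU.trans nhdsWithin_le_nhds)).congr'
        (hD.mono fun s hs => (hfg hs).symm)
    exact hi hy.1 (hg ht) ((tendsto_nhds_unique h2 h3).trans (hfg ht).symm)

theorem surjOn_sphere_of_injOn {σ : ℂ → ℂ} (hc : ContinuousOn σ (sphere 0 1))
    (hm : MapsTo σ (sphere 0 1) (sphere 0 1)) (hi : InjOn σ (sphere 0 1)) :
    SurjOn σ (sphere 0 1) (sphere 0 1) := by
  intro p hp
  by_contra hmiss
  have hpn : ‖p‖ = 1 := mem_sphere_zero_iff_norm.1 hp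
  have hp0 : p ≠ 0 := norm_ne_zero_iff.1 (by rw [hpn]; exact one_ne_zero)
  set q : ℂ → ℂ := fun w => -σ w / p with hq
  have hqn : ∀ w ∈ sphere (0 : ℂ) 1, ‖q w‖ = 1 := fun w hw => by
    simp only [hq, norm_div, norm_neg, hpn, mem_sphere_zero_iff_norm.1 (hm hw), div_one]
  have hqs : ∀ w ∈ sphere (0 : ℂ) 1, q w ∈ slitPlane := by
    intro w hw
    rw [Complex.mem_slitPlane_iff_arg]
    refine ⟨fun h => hmiss ⟨w, hw, ?_⟩, norm_ne_zero_iff.1 (by rw [hqn w hw]; exact one_ne_zero)⟩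
    have h1 := Complex.norm_mul_exp_arg_mul_I (q w)
    rw [h, hqn w hw, Complex.exp_pi_mul_I] at h1
    have h2 : -σ w = q w * p := by simp only [hq]; field_simp
    rw [← h1] at h2
    push_cast at h2
    linear_combination -h2
  have hqc : ContinuousOn (fun w => (q w).arg) (sphere 0 1) := fun w hw =>
    (Complex.continuousAt_arg (hqs w hw)).comp_continuousWithinAt ((hc.neg.div_const p) w hw)
  set e : ℝ → ℂ := fun φ => Complex.exp (φ * Complex.I) with he
  have hes : ∀ φ, e φ ∈ sphere (0 : ℂ) 1 := fun φ => by
    rw [mem_sphere_zero_iff_norm]; exact Complex.norm_exp_ofReal_mul_I φ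
  have hes' : ∀ φ, -e φ ∈ sphere (0 : ℂ) 1 := fun φ => by
    rw [mem_sphere_zero_iff_norm, norm_neg]; exact Complex.norm_exp_ofReal_mul_I φ
  have hec : Continuous e := by simp only [he]; fun_prop
  set k : ℝ → ℝ := fun φ => (q (e φ)).arg - (q (-e φ)).arg with hk
  have hkc : Continuous k :=
    (hqc.comp_continuous hec hes).sub (hqc.comp_continuous hec.neg hes')
  have hkπ : k Real.pi = -k 0 := by
    simp [hk, he, Complex.exp_pi_mul_I]
  have hzero : ∃ φ, k φ = 0 := by
    rcases le_total (k 0) 0 with h | h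
    · exact mem_range_of_exists_le_of_exists_ge hkc ⟨0, h⟩ ⟨Real.pi, by rw [hkπ]; linarith⟩
    · exact mem_range_of_exists_le_of_exists_ge hkc ⟨Real.pi, by rw [hkπ]; linarith⟩ ⟨0, h⟩
  obtain ⟨φ, hφ⟩ := hzero
  have h1 : q (e φ) = q (-e φ) :=
    Complex.ext_norm_arg ((hqn _ (hes φ)).trans (hqn _ (hes' φ)).symm) (sub_eq_zero.1 hφ)
  have h2 : σ (e φ) = σ (-e φ) := by
    simpa [hq, div_left_inj' hp0] using h1
  have h3 : e φ = -e φ := hi (hes φ) (hes' φ) h2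
  exact Complex.exp_ne_zero _ (self_eq_neg.1 h3)

section JordanCurve

variable {Γ : Set ℂ}

theorem IsJordanCurve.isCompact (h : IsJordanCurve Γ) : IsCompact Γ := by
  obtain ⟨γ, hc, -, rfl⟩ := h
  exact (isCompact_sphere 0 1).image_of_continuousOn hc

/-- An injective continuous image of the circle inside a Jordan curve is the whole curve. -/
theorem IsJordanCurve.subset_image_sphere (h : IsJordanCurve Γ) {κ : ℂ → ℂ}
    (hc : ContinuousOn κ (sphere 0 1)) (hm : MapsTo κ (sphere 0 1) Γ)
    (hi : InjOn κ (sphere 0 1)) : Γ ⊆ κ '' sphere 0 1 := by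
  obtain ⟨γ, hγc, hγi, rfl⟩ := h
  set g := Function.invFunOn γ (sphere 0 1) with hg
  have hgm : MapsTo g (γ '' sphere 0 1) (sphere 0 1) := fun y hy => Function.invFunOn_mem hy
  have hgr : RightInvOn g γ (γ '' sphere 0 1) := fun y hy => Function.invFunOn_eq hy
  have hgc : ContinuousOn g (γ '' sphere 0 1) := by
    refine continuousOn_of_rightInvOn isClosed_sphere hγc hγi hgm hgr fun t _ => ⟨1, ?_⟩
    filter_upwards [self_mem_nhdsWithin] with s hs
    exact (mem_sphere_zero_iff_norm.1 (hgm hs)).le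
  have hsurj := surjOn_sphere_of_injOn (hgc.comp hc hm) (hgm.comp hm)
    (hgr.injOn.comp hi hm)
  rintro _ ⟨w, hw, rfl⟩
  obtain ⟨v, hv, hvw⟩ := hsurj hw
  refine ⟨v, hv, ?_⟩
  rw [← hgr (hm hv)]
  exact congrArg γ hvw

/-- Two distinct points of a Jordan curve divide it into two arcs meeting only at these points. -/
theorem IsJordanCurve.exists_arcs (h : IsJordanCurve Γ) {a b : ℂ} (ha : a ∈ Γ) (hb : b ∈ Γ) :
    ∃ J₁ J₂ : Set ℂ, IsClosed J₁ ∧ IsClosed J₂ ∧ IsPreconnected J₁ ∧ IsPreconnected J₂ ∧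
      a ∈ J₁ ∧ b ∈ J₁ ∧ a ∈ J₂ ∧ b ∈ J₂ ∧ J₁ ∪ J₂ = Γ ∧ J₁ ∩ J₂ ⊆ {a, b} := by
  obtain ⟨γ, hγc, hγi, rfl⟩ := h
  set e : ℝ → ℂ := fun φ => Complex.exp (φ * Complex.I) with he
  have hes : ∀ φ, e φ ∈ sphere (0 : ℂ) 1 := fun φ => by
    rw [mem_sphere_zero_iff_norm]; exact Complex.norm_exp_ofReal_mul_I φ
  have hec : Continuous e := by simp only [he]; fun_prop
  have hper : ∀ φ, e (φ + 2 * Real.pi) = e φ := fun φ => by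
    simp only [he]; push_cast; rw [add_mul, Complex.exp_add, Complex.exp_two_pi_mul_I, mul_one]
  have hrep : ∀ w ∈ sphere (0 : ℂ) 1, ∃ φ ∈ Ioc (-Real.pi) Real.pi, e φ = w := fun w hw =>
    ⟨w.arg, Complex.arg_mem_Ioc w, by
      have := Complex.norm_mul_exp_arg_mul_I w
      rwa [mem_sphere_zero_iff_norm.1 hw, Complex.ofReal_one, one_mul] at this⟩
  set p : ℝ → ℂ := fun φ => γ (e φ) with hp
  have hpc : Continuous p := hγc.comp_continuous hec hes
  have hpper : ∀ φ, p (φ + 2 * Real.pi) = p φ := fun φ => by simp only [hp, hper]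
  have hpinj : ∀ φ ψ, p φ = p ψ → ∃ n : ℤ, φ = ψ + n * (2 * Real.pi) := by
    intro φ ψ hφψ
    obtain ⟨n, hn⟩ := Complex.exp_eq_exp_iff_exists_int.1 (hγi (hes φ) (hes ψ) hφψ)
    refine ⟨n, ?_⟩
    have h1 : (φ : ℂ) = ψ + n * (2 * Real.pi) := by
      apply mul_right_cancel₀ Complex.I_ne_zero
      rw [hn]; ring
    exact_mod_cast h1
  have main : ∀ φ ∈ Ioc (-Real.pi) Real.pi, ∀ ψ ∈ Ioc (-Real.pi) Real.pi, φ ≤ ψ →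
      ∃ J₁ J₂ : Set ℂ, IsClosed J₁ ∧ IsClosed J₂ ∧ IsPreconnected J₁ ∧ IsPreconnected J₂ ∧
      p φ ∈ J₁ ∧ p ψ ∈ J₁ ∧ p φ ∈ J₂ ∧ p ψ ∈ J₂ ∧ J₁ ∪ J₂ = γ '' sphere 0 1 ∧
      J₁ ∩ J₂ ⊆ {p φ, p ψ} := by
    intro φ hφ ψ hψ hφψ
    have hπ := Real.pi_pos
    have hle : ψ ≤ φ + 2 * Real.pi := by linarith [hφ.1, hψ.2]
    refine ⟨p '' Icc φ ψ, p '' Icc ψ (φ + 2 * Real.pi), (isCompact_Icc.image hpc).isClosed,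
      (isCompact_Icc.image hpc).isClosed, isPreconnected_Icc.image _ hpc.continuousOn,
      isPreconnected_Icc.image _ hpc.continuousOn, mem_image_of_mem _ (left_mem_Icc.2 hφψ),
      mem_image_of_mem _ (right_mem_Icc.2 hφψ), ⟨_, right_mem_Icc.2 hle, hpper φ⟩,
      mem_image_of_mem _ (left_mem_Icc.2 hle), ?_, ?_⟩
    · refine Subset.antisymm ?_ ?_
      · rintro _ (⟨s, -, rfl⟩ | ⟨s, -, rfl⟩) <;> exact mem_image_of_mem _ (hes s)
      · rintro _ ⟨w, hw, rfl⟩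
        obtain ⟨s, hs, rfl⟩ := hrep w hw
        rw [← image_union, Icc_union_Icc_eq_Icc hφψ hle]
        rcases le_total φ s with h | h
        · exact ⟨s, ⟨h, by linarith [hs.2, hφ.1]⟩, rfl⟩
        · exact ⟨s + 2 * Real.pi, ⟨by linarith [hs.1, hφ.2], by linarith⟩, hpper s⟩
    · rintro y ⟨⟨s, hs, rfl⟩, ⟨s', hs', hss'⟩⟩
      obtain ⟨n, hn⟩ := hpinj _ _ hss'
      have hn1 : n < 2 := by
        by_contra! h
        have : (2 : ℝ) ≤ n := by exact_mod_cast h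
        nlinarith [hs'.2, hs.1]
      have hn0 : -1 < n := by
        by_contra! h
        have : (n : ℝ) ≤ -1 := by exact_mod_cast h
        nlinarith [hs'.1, hs.2]
      obtain rfl | rfl : n = 0 ∨ n = 1 := by omega
      · right
        simp only [Int.cast_zero, zero_mul, add_zero] at hn
        have : s = ψ := le_antisymm hs.2 (hn ▸ hs'.1)
        rw [this]; rfl
      · left
        simp only [Int.cast_one, one_mul] at hn
        have : s = φ := le_antisymm (by linarith [hs'.2]) hs.1
        rw [this]
  obtain ⟨w, hw, rfl⟩ := ha
  obtain ⟨v, hv, rfl⟩ := hb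
  obtain ⟨φ, hφ, rfl⟩ := hrep w hw
  obtain ⟨ψ, hψ, rfl⟩ := hrep v hv
  rcases le_total φ ψ with h | h
  · exact main φ hφ ψ hψ h
  · obtain ⟨J₁, J₂, h1, h2, h3, h4, h5, h6, h7, h8, h9, h10⟩ := main ψ hψ φ hφ h
    exact ⟨J₁, J₂, h1, h2, h3, h4, h6, h5, h8, h7, h9, by rwa [pair_comm]⟩

end JordanCurve

theorem dist_le_hausdorffMeasure_of_isPreconnected {J : Set ℂ} (hJ : IsPreconnected J) {p x : ℂ}
    (hp : p ∈ J) (hx : x ∈ J) : ENNReal.ofReal (dist x p) ≤ μH[1] J := by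
  have hL : LipschitzWith 1 fun y : ℂ => dist y p := LipschitzWith.dist_left p
  have h1 := hL.hausdorffMeasure_image_le zero_le_one J
  have h2 : Icc 0 (dist x p) ⊆ (fun y : ℂ => dist y p) '' J := by
    have := hJ.intermediate_value hp hx hL.continuous.continuousOn
    simpa using this
  calc ENNReal.ofReal (dist x p) = volume (Icc 0 (dist x p)) := by simp
    _ ≤ volume ((fun y : ℂ => dist y p) '' J) := measure_mono h2
    _ ≤ μH[1] J := by rw [← hausdorffMeasure_real]; simpa using h1

theorem IsQuasismooth.exists_arc {Γ : Set ℂ} {Λ : ℝ} (h : IsQuasismooth Γ Λ) {p q : ℂ}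
    (hp : p ∈ Γ) (hq : q ∈ Γ) : ∃ J ⊆ Γ, IsPreconnected J ∧ p ∈ J ∧ q ∈ J ∧
      ∀ x ∈ J, dist x p ≤ 2 * Λ * dist p q := by
  rcases eq_or_ne p q with rfl | hpq
  · exact ⟨{p}, singleton_subset_iff.2 hp, isPreconnected_singleton, rfl, rfl, by simp⟩
  have hd : 0 < Λ * dist p q := mul_pos (zero_lt_one.trans_le h.1) (dist_pos.2 hpq)
  have hlt : shorterArcLength Γ p q < ENNReal.ofReal (2 * Λ * dist p q) :=
    (h.2 p hp q hq).trans_lt ((ENNReal.ofReal_lt_ofReal_iff (by linarith)).2 (by linarith))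
  simp only [shorterArcLength, iInf_lt_iff] at hlt
  obtain ⟨J, ⟨⟨hJΓ, -, hJc⟩, hpJ, hqJ⟩, hJ⟩ := hlt
  refine ⟨J, hJΓ, hJc, hpJ, hqJ, fun x hx => ?_⟩
  exact (ENNReal.ofReal_le_ofReal_iff (by linarith)).1
    ((dist_le_hausdorffMeasure_of_isPreconnected hJc hpJ hx).trans hJ.le)

section Inverse

variable {Γ : Set ℂ} {Φ : ℂ → ℂ}

theorem IsExtConformal.tendsto_cobounded {Ω : Set ℂ} (h : IsExtConformal Ω Φ) :
    Tendsto Φ (cobounded ℂ) (cobounded ℂ) := by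
  obtain ⟨c, hc, hlim⟩ := h.2.2
  rw [← tendsto_norm_atTop_iff_cobounded]
  have h1 : Tendsto (fun z => ‖Φ z / z‖ * ‖z‖) (cobounded ℂ) atTop := by
    refine Tendsto.pos_mul_atTop (C := ‖(c : ℂ)‖) ?_ hlim.norm tendsto_norm_cobounded_atTop
    simpa using hc.ne'
  refine h1.congr' ?_
  filter_upwards [eventually_ne_cobounded (0 : ℂ)] with z hz
  rw [norm_div, div_mul_cancel₀ _ (norm_ne_zero_iff.2 hz)]

/-- The inverse of the boundary extension of a conformal map onto the exterior of the disk. -/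
def extInverse (Γ : Set ℂ) (Φ : ℂ → ℂ) : ℂ → ℂ :=
  Function.invFunOn Φ (closure (unboundedComponent Γ))

theorem mapsTo_extInverse (hΦ : IsExtConformalClosure (unboundedComponent Γ) Φ) :
    MapsTo (extInverse Γ Φ) {w | 1 ≤ ‖w‖} (closure (unboundedComponent Γ)) := fun _ hw =>
  Function.invFunOn_mem (hΦ.2.2.surjOn hw)

theorem rightInvOn_extInverse (hΦ : IsExtConformalClosure (unboundedComponent Γ) Φ) :
    RightInvOn (extInverse Γ Φ) Φ {w | 1 ≤ ‖w‖} := fun _ hw =>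
  Function.invFunOn_eq (hΦ.2.2.surjOn hw)

theorem leftInvOn_extInverse (hΦ : IsExtConformalClosure (unboundedComponent Γ) Φ) :
    LeftInvOn (extInverse Γ Φ) Φ (closure (unboundedComponent Γ)) :=
  hΦ.2.2.injOn.leftInvOn_invFunOn

theorem mapsTo_extInverse_extDisk (hΦ : IsExtConformalClosure (unboundedComponent Γ) Φ) :
    MapsTo (extInverse Γ Φ) extDisk (unboundedComponent Γ) := by
  intro w hw
  obtain ⟨z, hz, rfl⟩ := hΦ.1.2.1.surjOn hw
  rwa [leftInvOn_extInverse hΦ (subset_closure hz)]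

theorem continuousOn_extInverse (hΦ : IsExtConformalClosure (unboundedComponent Γ) Φ) :
    ContinuousOn (extInverse Γ Φ) {w | 1 ≤ ‖w‖} := by
  refine continuousOn_of_rightInvOn isClosed_closure hΦ.2.1 hΦ.2.2.injOn (mapsTo_extInverse hΦ)
    (rightInvOn_extInverse hΦ) fun t ht => ?_
  have h1 : ∀ᶠ z in cobounded ℂ, ‖t‖ + 1 < ‖Φ z‖ :=
    (tendsto_norm_cobounded_atTop.comp hΦ.1.tendsto_cobounded).eventually
      (eventually_gt_atTop (‖t‖ + 1))
  obtain ⟨M, hM⟩ := (isBounded_def.2 (by filter_upwards [h1] with z hz using not_le.2 hz) :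
    IsBounded {z | ‖Φ z‖ ≤ ‖t‖ + 1}).exists_norm_le
  refine ⟨M, ?_⟩
  have h2 : ∀ᶠ s in 𝓝[{w : ℂ | 1 ≤ ‖w‖}] t, ‖s‖ < ‖t‖ + 1 :=
    nhdsWithin_le_nhds (continuous_norm.continuousAt.eventually (gt_mem_nhds (lt_add_one _)))
  filter_upwards [h2, self_mem_nhdsWithin] with s hs hsD
  refine hM _ ?_
  show ‖Φ (extInverse Γ Φ s)‖ ≤ _
  rw [rightInvOn_extInverse hΦ hsD]
  exact hs.le

theorem injOn_extInverse (hΦ : IsExtConformalClosure (unboundedComponent Γ) Φ) :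
    InjOn (extInverse Γ Φ) {w | 1 ≤ ‖w‖} :=
  (rightInvOn_extInverse hΦ).injOn

theorem extDisk_subset : extDisk ⊆ {w : ℂ | 1 ≤ ‖w‖} :=
  fun w (hw : 1 < ‖w‖) => show 1 ≤ ‖w‖ from hw.le

theorem isOpen_extDisk : IsOpen extDisk := isOpen_lt continuous_const continuous_norm

theorem differentiableOn_extInverse (hΓ : IsClosed Γ)
    (hΦ : IsExtConformalClosure (unboundedComponent Γ) Φ) :
    DifferentiableOn ℂ (extInverse Γ Φ) extDisk := by
  intro w hw
  have hΩ := isOpen_unboundedComponent hΓ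
  have hD := isOpen_extDisk.mem_nhds hw
  have hcont : ∀ v ∈ extDisk, ContinuousAt (extInverse Γ Φ) v := fun v hv =>
    ((continuousOn_extInverse hΦ).mono extDisk_subset).continuousAt (isOpen_extDisk.mem_nhds hv)
  have hz := mapsTo_extInverse_extDisk hΦ hw
  have han : AnalyticAt ℂ (deriv Φ) (extInverse Γ Φ w) := (hΦ.1.1.analyticAt (hΩ.mem_nhds hz)).deriv
  refine DifferentiableAt.differentiableWithinAt ?_
  rcases han.eventually_eq_zero_or_eventually_ne_zero with h0 | h0
  · exfalso
    obtain ⟨ε, hε, hb⟩ := Metric.eventually_nhds_iff_ball.1 (h0.and (hΩ.mem_nhds hz))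
    have hconst : ∀ y ∈ ball (extInverse Γ Φ w) ε, Φ y = Φ (extInverse Γ Φ w) := fun y hy =>
      isOpen_ball.is_const_of_deriv_eq_zero (convex_ball (extInverse Γ Φ w) ε).isPreconnected
        (hΦ.1.1.mono fun y hy => (hb y hy).2) (fun y hy => (hb y hy).1) hy (mem_ball_self hε)
    have hy : extInverse Γ Φ w + ((ε / 2 : ℝ) : ℂ) ∈ ball (extInverse Γ Φ w) ε := by
      rw [mem_ball, dist_eq_norm, add_sub_cancel_left, Complex.norm_of_nonneg (by positivity)]
      linarith
    have h1 := hΦ.1.2.1.injOn (hb _ hy).2 hz (hconst _ hy)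
    simp [hε.ne'] at h1
  · refine (Complex.analyticAt_of_differentiable_on_punctured_nhds_of_continuousAt ?_
      (hcont w hw)).differentiableAt
    have htend : Tendsto (extInverse Γ Φ) (𝓝[≠] w) (𝓝[≠] (extInverse Γ Φ w)) := by
      refine tendsto_nhdsWithin_iff.2 ⟨(hcont w hw).tendsto.mono_left nhdsWithin_le_nhds, ?_⟩
      filter_upwards [nhdsWithin_le_nhds hD, self_mem_nhdsWithin] with v hv hvw
      exact fun h => hvw (injOn_extInverse hΦ (extDisk_subset hv) (extDisk_subset hw) h)
    filter_upwards [htend.eventually h0, nhdsWithin_le_nhds hD] with v hv hvD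
    have hzv := mapsTo_extInverse_extDisk hΦ hvD
    refine (HasDerivAt.of_local_left_inverse (hcont v hvD)
      (hΦ.1.1.differentiableAt (hΩ.mem_nhds hzv)).hasDerivAt hv ?_).differentiableAt
    filter_upwards [isOpen_extDisk.mem_nhds hvD] with y hy
    exact rightInvOn_extInverse hΦ (extDisk_subset hy)

theorem subset_closure_unboundedComponent (hΓ : IsJordanCurve Γ)
    (hΦ : IsExtConformalClosure (unboundedComponent Γ) Φ) : Γ ⊆ closure (unboundedComponent Γ) := by
  have hsub : sphere (0 : ℂ) 1 ⊆ {w : ℂ | 1 ≤ ‖w‖} := fun w hw =>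
    (mem_sphere_zero_iff_norm.1 hw).ge
  have hm : MapsTo (extInverse Γ Φ) (sphere 0 1) Γ := by
    intro w hw
    by_contra hwΓ
    have h1 := mem_unboundedComponent_of_mem_closure hΓ.isCompact.isClosed
      (mapsTo_extInverse hΦ (hsub hw)) hwΓ
    have h2 : 1 < ‖Φ (extInverse Γ Φ w)‖ := hΦ.1.2.1.mapsTo h1
    rw [rightInvOn_extInverse hΦ (hsub hw), mem_sphere_zero_iff_norm.1 hw] at h2
    exact lt_irrefl _ h2
  refine (hΓ.subset_image_sphere ((continuousOn_extInverse hΦ).mono hsub) hm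
    ((injOn_extInverse hΦ).mono hsub)).trans ?_
  rintro _ ⟨w, hw, rfl⟩
  exact mapsTo_extInverse hΦ (hsub hw)

end Inverse

section LinearConnectivity

variable {Γ : Set ℂ} {Λ : ℝ} {p q : ℂ}

theorem segment_subset_of_disjoint (hΓ : IsClosed Γ) (hp : p ∈ closure (unboundedComponent Γ))
    (h : segment ℝ p q ∩ Γ = ∅) : segment ℝ p q ⊆ closure (unboundedComponent Γ) := by
  have hd : segment ℝ p q ⊆ Γᶜ := fun x hx hxΓ => by
    have : x ∈ segment ℝ p q ∩ Γ := ⟨hx, hxΓ⟩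
    simp [h] at this
  exact (subset_unboundedComponent_of_isPreconnected (convex_segment p q).isPreconnected hd
    (left_mem_segment ℝ p q) (mem_unboundedComponent_of_mem_closure hΓ hp
    (hd (left_mem_segment ℝ p q)))).trans subset_closure

theorem exists_first_mem_segment (hΓ : IsClosed Γ) (hp : p ∈ closure (unboundedComponent Γ))
    (hcl : Γ ⊆ closure (unboundedComponent Γ)) (h : (segment ℝ p q ∩ Γ).Nonempty) :
    ∃ a ∈ segment ℝ p q, a ∈ Γ ∧ segment ℝ p a ⊆ closure (unboundedComponent Γ) := by
  have hK : IsCompact (segment ℝ p q ∩ Γ) := by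
    refine IsCompact.inter_right ?_ hΓ
    rw [segment_eq_image_lineMap]
    exact isCompact_Icc.image (by fun_prop)
  obtain ⟨a, ⟨ha, haΓ⟩, hmin⟩ := hK.exists_isMinOn h (f := dist p) (by fun_prop)
  refine ⟨a, ha, haΓ, fun x hx => ?_⟩
  have hsub : segment ℝ p a ⊆ segment ℝ p q :=
    (convex_segment p q).segment_subset (left_mem_segment ℝ p q) ha
  have hxd := dist_add_dist_of_mem_segment hx
  rcases eq_or_ne x a with rfl | hxa
  · exact hcl haΓ
  have hxlt : dist p x < dist p a := by linarith [dist_pos.2 hxa]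
  have hT : segment ℝ p a ∩ ball p (dist p a) ⊆ Γᶜ := fun y hy hyΓ => by
    have h1 : dist p a ≤ dist p y := hmin ⟨hsub hy.1, hyΓ⟩
    exact absurd (mem_ball'.1 hy.2) h1.not_gt
  have hpT : p ∈ segment ℝ p a ∩ ball p (dist p a) :=
    ⟨left_mem_segment ℝ p a, mem_ball_self (dist_nonneg.trans_lt hxlt)⟩
  exact subset_closure (subset_unboundedComponent_of_isPreconnected
    ((convex_segment p a).inter (convex_ball p _)).isPreconnected hT hpT
    (mem_unboundedComponent_of_mem_closure hΓ hp (hT hpT)) ⟨hx, mem_ball'.2 hxlt⟩)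

/-- Two points of the closure of the unbounded component can be joined by the segment between
them, with the portion between two points of `Γ` replaced by any connected subset of `Γ`. -/
theorem exists_isPreconnected_of_segment (hΓ : IsClosed Γ)
    (hcl : Γ ⊆ closure (unboundedComponent Γ)) (hp : p ∈ closure (unboundedComponent Γ))
    (hq : q ∈ closure (unboundedComponent Γ)) {P : ℂ → Prop} (hP : ∀ x ∈ segment ℝ p q, P x)
    (hJ : ∀ a ∈ segment ℝ p q, ∀ b ∈ segment ℝ p q, a ∈ Γ → b ∈ Γ →
      ∃ J ⊆ Γ, IsPreconnected J ∧ a ∈ J ∧ b ∈ J ∧ ∀ x ∈ J, P x) :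
    ∃ E ⊆ closure (unboundedComponent Γ), IsPreconnected E ∧ p ∈ E ∧ q ∈ E ∧ ∀ x ∈ E, P x := by
  rcases eq_empty_or_nonempty (segment ℝ p q ∩ Γ) with h | h
  · exact ⟨segment ℝ p q, segment_subset_of_disjoint hΓ hp h, (convex_segment p q).isPreconnected,
      left_mem_segment ℝ p q, right_mem_segment ℝ p q, hP⟩
  obtain ⟨a, ha, haΓ, hpa⟩ := exists_first_mem_segment hΓ hp hcl h
  obtain ⟨b, hb, hbΓ, hqb⟩ := exists_first_mem_segment (q := p) hΓ hq hcl
    (by rwa [segment_symm])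
  rw [segment_symm] at hb
  obtain ⟨J, hJΓ, hJc, haJ, hbJ, hJP⟩ := hJ a ha b hb haΓ hbΓ
  have hsub₁ : segment ℝ p a ⊆ segment ℝ p q :=
    (convex_segment p q).segment_subset (left_mem_segment ℝ p q) ha
  have hsub₂ : segment ℝ q b ⊆ segment ℝ p q :=
    (convex_segment p q).segment_subset (right_mem_segment ℝ p q) hb
  refine ⟨segment ℝ p a ∪ J ∪ segment ℝ q b, union_subset (union_subset hpa (hJΓ.trans hcl)) hqb,
    ?_, Or.inl (Or.inl (left_mem_segment ℝ p a)), Or.inr (left_mem_segment ℝ q b), ?_⟩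
  · exact ((convex_segment p a).isPreconnected.union a (right_mem_segment ℝ p a) haJ hJc).union b
      (Or.inr hbJ) (right_mem_segment ℝ q b) (convex_segment q b).isPreconnected
  · rintro x ((hx | hx) | hx)
    exacts [hP x (hsub₁ hx), hJP x hx, hP x (hsub₂ hx)]

theorem exists_isPreconnected_dist_le (hΓ : IsClosed Γ) (hΓq : IsQuasismooth Γ Λ)
    (hcl : Γ ⊆ closure (unboundedComponent Γ)) (hp : p ∈ closure (unboundedComponent Γ))
    (hq : q ∈ closure (unboundedComponent Γ)) :
    ∃ E ⊆ closure (unboundedComponent Γ), IsPreconnected E ∧ p ∈ E ∧ q ∈ E ∧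
      ∀ x ∈ E, dist x p ≤ (1 + 4 * Λ) * dist p q := by
  have hΛ := hΓq.1
  have hseg : ∀ x ∈ segment ℝ p q, dist x p ≤ dist p q := fun x hx => by
    have := dist_add_dist_of_mem_segment hx
    rw [dist_comm x p]; linarith [dist_nonneg (x := x) (y := q)]
  refine exists_isPreconnected_of_segment hΓ hcl hp hq (fun x hx => ?_) fun a ha b hb haΓ hbΓ => ?_
  · nlinarith [hseg x hx, dist_nonneg (x := p) (y := q)]
  · obtain ⟨J, hJΓ, hJc, haJ, hbJ, hJ⟩ := hΓq.exists_arc haΓ hbΓ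
    refine ⟨J, hJΓ, hJc, haJ, hbJ, fun x hx => ?_⟩
    have h1 : dist a b ≤ 2 * dist p q := by
      linarith [dist_triangle_right a b p, hseg a ha, hseg b hb]
    have h2 := hJ x hx
    have h3 := dist_triangle x a p
    nlinarith [hseg a ha]

theorem IsQuasismooth.exists_arc_disjoint_ball (hΓJ : IsJordanCurve Γ) (hΓq : IsQuasismooth Γ Λ)
    {a b w : ℂ} {R : ℝ} (ha : a ∈ Γ) (hb : b ∈ Γ) (haR : R ≤ dist a w) (hbR : R ≤ dist b w) :
    ∃ J ⊆ Γ, IsPreconnected J ∧ a ∈ J ∧ b ∈ J ∧ ∀ x ∈ J, R ≤ (1 + 4 * Λ) * dist x w := by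
  have hΛ := hΓq.1
  obtain ⟨J₁, J₂, hc₁, hc₂, hJ₁, hJ₂, ha₁, hb₁, ha₂, hb₂, hun, hint⟩ := hΓJ.exists_arcs ha hb
  by_cases h₁ : ∀ x ∈ J₁, R ≤ (1 + 4 * Λ) * dist x w
  · exact ⟨J₁, hun ▸ subset_union_left, hJ₁, ha₁, hb₁, h₁⟩
  by_cases h₂ : ∀ x ∈ J₂, R ≤ (1 + 4 * Λ) * dist x w
  · exact ⟨J₂, hun ▸ subset_union_right, hJ₂, ha₂, hb₂, h₂⟩
  exfalso
  push Not at h₁ h₂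
  obtain ⟨x, hx, hxR⟩ := h₁
  obtain ⟨y, hy, hyR⟩ := h₂
  obtain ⟨J, hJΓ, hJc, hxJ, hyJ, hJ⟩ := hΓq.exists_arc (hun ▸ Or.inl hx : x ∈ Γ)
    (hun ▸ Or.inr hy : y ∈ Γ)
  obtain ⟨v, hvJ, hv⟩ := isPreconnected_closed_iff.1 hJc J₁ J₂ hc₁ hc₂ (hun ▸ hJΓ)
    ⟨x, hxJ, hx⟩ ⟨y, hyJ, hy⟩
  have hvR : R ≤ dist v w := by
    rcases hint hv with rfl | rfl
    exacts [haR, hbR]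
  have h1 := hJ v hvJ
  have h2 := dist_triangle_right x y w
  have h3 := dist_triangle v x w
  have h4 : R ≤ (1 + 2 * Λ) * dist x w + 2 * Λ * dist y w := by nlinarith
  nlinarith [mul_lt_mul_of_pos_left hxR (by linarith : 0 < 1 + 2 * Λ),
    mul_lt_mul_of_pos_left hyR (by linarith : 0 < 2 * Λ)]

theorem le_dist_of_mem_segment_ray {z₁ z₂ x : ℂ} {M : ℝ} (hM : 0 ≤ M)
    (hx : x ∈ segment ℝ z₂ (z₂ + (M : ℂ) * (z₂ - z₁))) : dist z₂ z₁ ≤ dist x z₁ := by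
  rw [segment_eq_image_lineMap] at hx
  obtain ⟨θ, hθ, rfl⟩ := hx
  have h1 : AffineMap.lineMap z₂ (z₂ + (M : ℂ) * (z₂ - z₁)) θ - z₁ =
      ((1 + θ * M : ℝ) : ℂ) * (z₂ - z₁) := by
    simp [AffineMap.lineMap_apply]; ring
  have h2 : 0 ≤ θ * M := mul_nonneg hθ.1 hM
  rw [dist_eq_norm, dist_eq_norm, h1, norm_mul, Complex.norm_of_nonneg (by linarith)]
  nlinarith [norm_nonneg (z₂ - z₁)]

theorem exists_isPreconnected_le_dist (hΓJ : IsJordanCurve Γ) (hΓq : IsQuasismooth Γ Λ)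
    (hcl : Γ ⊆ closure (unboundedComponent Γ)) {z₁ z₂ : ℂ} {M : ℝ} (hM : 0 ≤ M)
    (hz₂ : z₂ ∈ closure (unboundedComponent Γ))
    (hq : z₂ + (M : ℂ) * (z₂ - z₁) ∈ closure (unboundedComponent Γ)) :
    ∃ E ⊆ closure (unboundedComponent Γ), IsPreconnected E ∧ z₂ ∈ E ∧
      z₂ + (M : ℂ) * (z₂ - z₁) ∈ E ∧ ∀ x ∈ E, dist z₂ z₁ ≤ (1 + 4 * Λ) * dist x z₁ := by
  have hΛ := hΓq.1
  refine exists_isPreconnected_of_segment hΓJ.isCompact.isClosed hcl hz₂ hq (fun x hx => ?_)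
    fun a ha b hb haΓ hbΓ => hΓq.exists_arc_disjoint_ball hΓJ haΓ hbΓ
      (le_dist_of_mem_segment_ray hM ha) (le_dist_of_mem_segment_ray hM hb)
  nlinarith [le_dist_of_mem_segment_ray hM hx, dist_nonneg (x := x) (y := z₁)]

end LinearConnectivity

section Distortion

/-- The conformal map distorts distances in a quasisymmetric way at well-separated scales. -/
theorem IsExtConformalClosure.dist_le_of_dist_map_le {Γ : Set ℂ} {Λ : ℝ} {Φ : ℂ → ℂ}
    (hΓJ : IsJordanCurve Γ) (hΓq : IsQuasismooth Γ Λ)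
    (hΦ : IsExtConformalClosure (unboundedComponent Γ) Φ) {z₁ z₂ z₃ : ℂ}
    (h₁ : z₁ ∈ closure (unboundedComponent Γ)) (h₂ : z₂ ∈ closure (unboundedComponent Γ))
    (h₃ : z₃ ∈ closure (unboundedComponent Γ))
    (h : dist (Φ z₁) (Φ z₂) ≤ dist (Φ z₁) (Φ z₃) / 2) :
    dist z₁ z₂ ≤ (1 + 4 * Λ) ^ 2 * Real.exp (4 * Real.pi ^ 2 / Real.log 2) * dist z₁ z₃ := by
  have hcl := subset_closure_unboundedComponent hΓJ hΦ
  have hΓ := hΓJ.isCompact.isClosed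
  have hlog : 0 < Real.log 2 := Real.log_pos one_lt_two
  set C : ℝ := 1 + 4 * Λ with hC
  have hC1 : 1 ≤ C := by linarith [hΓq.1]
  set e : ℝ := Real.exp (4 * Real.pi ^ 2 / Real.log 2) with he
  have he1 : 1 ≤ e := Real.one_le_exp (by positivity)
  rcases eq_or_ne z₁ z₂ with rfl | h12
  · rw [dist_self]; positivity
  have ht : 0 < dist (Φ z₁) (Φ z₂) := dist_pos.2 fun h' => h12 (hΦ.2.2.injOn h₁ h₂ h')
  have h13 : z₁ ≠ z₃ := by
    rintro rfl
    rw [dist_self] at h; linarith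
  have hd3 : 0 < dist z₁ z₃ := dist_pos.2 h13
  by_cases hrR : dist z₁ z₂ / C ≤ C * dist z₁ z₃
  · rw [div_le_iff₀ (by positivity)] at hrR
    refine hrR.trans ?_
    rw [show C * dist z₁ z₃ * C = C ^ 2 * 1 * dist z₁ z₃ by ring]
    gcongr
  push Not at hrR
  have key : ∀ E ⊆ closure (unboundedComponent Γ), IsPreconnected E → ∀ p ∈ E, ∀ q ∈ E, ∀ s,
      dist (Φ p) (Φ z₁) ≤ s → s ≤ dist (Φ q) (Φ z₁) →
      ∃ t, dist t (Φ z₁) = s ∧ 1 ≤ ‖t‖ ∧ extInverse Γ Φ t ∈ E := by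
    intro E hE hEc p hp q hq s hs₁ hs₂
    have hcont : ContinuousOn (fun z => dist (Φ z) (Φ z₁)) E :=
      (continuous_id.dist continuous_const).comp_continuousOn (hΦ.2.1.mono hE)
    obtain ⟨z, hz, hzs⟩ := hEc.intermediate_value hp hq hcont ⟨hs₁, hs₂⟩
    exact ⟨Φ z, hzs, hΦ.2.2.mapsTo (hE hz), by rwa [leftInvOn_extInverse hΦ (hE hz)]⟩
  obtain ⟨E, hE, hEc, h1E, h3E, hEd⟩ := exists_isPreconnected_dist_le hΓ hΓq hcl h₁ h₃
  obtain ⟨M, hM, hq, hqd⟩ : ∃ M : ℝ, 0 ≤ M ∧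
      z₂ + (M : ℂ) * (z₂ - z₁) ∈ closure (unboundedComponent Γ) ∧
      dist (Φ z₁) (Φ z₃) ≤ dist (Φ (z₂ + (M : ℂ) * (z₂ - z₁))) (Φ z₁) := by
    have hray : Tendsto (fun M : ℝ => z₂ + (M : ℂ) * (z₂ - z₁)) atTop (cobounded ℂ) := by
      rw [← tendsto_norm_atTop_iff_cobounded]
      refine tendsto_atTop_mono (f := fun M : ℝ => M * ‖z₂ - z₁‖ - ‖z₂‖) (fun M => ?_) ?_
      · have h5 := norm_sub_norm_le ((M : ℂ) * (z₂ - z₁)) (-z₂)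
        rw [sub_neg_eq_add, norm_neg, add_comm, norm_mul, Complex.norm_real] at h5
        have h6 := mul_le_mul_of_nonneg_right (Real.le_norm_self M) (norm_nonneg (z₂ - z₁))
        rw [add_comm] at h5
        rw [add_comm z₂]
        linarith
      · exact tendsto_atTop_add_const_right _ _
          (tendsto_id.atTop_mul_const (norm_pos_iff.2 (sub_ne_zero.2 h12.symm)))
    have hev₁ := hray.eventually (eventually_mem_unboundedComponent hΓJ.isCompact.isBounded)
    have hev₂ := (tendsto_norm_cobounded_atTop.comp (hΦ.1.tendsto_cobounded.comp hray)).eventually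
      (eventually_ge_atTop (dist (Φ z₁) (Φ z₃) + ‖Φ z₁‖))
    obtain ⟨M, ⟨hM₁, hM₂⟩, hM⟩ := ((hev₁.and hev₂).and (eventually_ge_atTop (0 : ℝ))).exists
    refine ⟨M, hM, subset_closure hM₁, ?_⟩
    simp only [Function.comp_apply] at hM₂
    rw [dist_eq_norm (Φ (z₂ + _))]
    linarith [norm_sub_norm_le (Φ (z₂ + (M : ℂ) * (z₂ - z₁))) (Φ z₁)]
  obtain ⟨F, hF, hFc, h2F, hqF, hFd⟩ := exists_isPreconnected_le_dist hΓJ hΓq hcl hM h₂ hq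
  have hmain := log_mul_log_le (continuousOn_extInverse hΦ) (differentiableOn_extInverse hΓ hΦ)
    ((injOn_extInverse hΦ).mono extDisk_subset) (t₁ := Φ z₁) (w₀ := z₁)
    (hΦ.2.2.mapsTo h₁) (r := C * dist z₁ z₃) (R := dist z₁ z₂ / C) (by positivity) hrR ht
    (s₂ := dist (Φ z₁) (Φ z₃)) (by linarith)
    (fun s hs => by
      obtain ⟨t, h5, h6, h7⟩ := key E hE hEc z₁ h1E z₃ h3E s
        (by rw [dist_self]; exact (ht.trans hs.1).le) (by rw [dist_comm]; exact hs.2.le)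
      exact ⟨t, h5, h6, by rw [← dist_eq_norm]; exact hEd _ h7⟩)
    (fun s hs => by
      obtain ⟨t, h5, h6, h7⟩ := key F hF hFc z₂ h2F _ hqF s
        (by rw [dist_comm]; exact hs.1.le) (hs.2.le.trans hqd)
      refine ⟨t, h5, h6, ?_⟩
      rw [← dist_eq_norm, div_le_iff₀ (by positivity), mul_comm, dist_comm]
      exact hFd _ h7)
  have hd2 : 0 < dist z₁ z₂ := dist_pos.2 h12
  have h5 : Real.log 2 ≤ Real.log (dist (Φ z₁) (Φ z₃) / dist (Φ z₁) (Φ z₂)) :=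
    Real.log_le_log two_pos ((le_div_iff₀ ht).2 (by linarith))
  have h6 : 0 ≤ Real.log (dist z₁ z₂ / C / (C * dist z₁ z₃)) :=
    Real.log_nonneg ((one_le_div (by positivity)).2 hrR.le)
  have h7 : Real.log (dist z₁ z₂ / C / (C * dist z₁ z₃)) ≤ 4 * Real.pi ^ 2 / Real.log 2 := by
    rw [le_div_iff₀ hlog]
    nlinarith [mul_le_mul_of_nonneg_right h5 h6]
  have h8 := (Real.log_le_iff_le_exp (by positivity)).1 h7
  rw [div_div, div_le_iff₀ (by positivity)] at h8
  calc dist z₁ z₂ ≤ e * (C * (C * dist z₁ z₃)) := h8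
    _ = _ := by ring

/-- Two points outside the open unit disk have a third one there which is the vertex of a right
isosceles triangle with the segment between them as hypotenuse. -/
theorem exists_one_le_norm_dist_eq {a b : ℂ} (ha : 1 ≤ ‖a‖) (hb : 1 ≤ ‖b‖) :
    ∃ m : ℂ, 1 ≤ ‖m‖ ∧ dist a m * √2 = dist a b ∧ dist m b * √2 = dist a b := by
  have hsq : ∀ z : ℂ, ‖z‖ ^ 2 = z.re ^ 2 + z.im ^ 2 := fun z => by
    rw [← Complex.normSq_eq_norm_sq, Complex.normSq_apply]; ring
  have aux : ∀ x y : ℂ, 2 * ‖x‖ ^ 2 = ‖y‖ ^ 2 → ‖x‖ * √2 = ‖y‖ := fun x y h => by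
    rw [← Real.sqrt_sq (norm_nonneg y), ← h, Real.sqrt_mul two_pos.le,
      Real.sqrt_sq (norm_nonneg x), mul_comm]
  have hdist : ∀ ε : ℝ, ε ^ 2 = 1 → ∀ m : ℂ,
      m = ⟨(a.re + b.re) / 2 - ε * (a.im - b.im) / 2, (a.im + b.im) / 2 + ε * (a.re - b.re) / 2⟩ →
      dist a m * √2 = dist a b ∧ dist m b * √2 = dist a b := by
    rintro ε hε _ rfl
    rw [dist_eq_norm, dist_eq_norm, dist_eq_norm]
    constructor <;> refine aux _ _ ?_ <;> rw [hsq, hsq] <;>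
      simp only [Complex.sub_re, Complex.sub_im] <;>
      linear_combination ((a.re - b.re) ^ 2 + (a.im - b.im) ^ 2) / 2 * hε
  have h1 : 2 ≤ ‖a‖ ^ 2 + ‖b‖ ^ 2 := by nlinarith
  rw [hsq, hsq] at h1
  rcases le_total 0 ((a.im + b.im) * (a.re - b.re) - (a.re + b.re) * (a.im - b.im)) with h | h
  · refine ⟨_, ?_, hdist 1 (by norm_num) _ rfl⟩
    rw [← one_le_sq_iff₀ (norm_nonneg _), hsq]
    dsimp only
    nlinarith
  · refine ⟨_, ?_, hdist (-1) (by norm_num) _ rfl⟩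
    rw [← one_le_sq_iff₀ (norm_nonneg _), hsq]
    dsimp only
    nlinarith

/-- On the exterior of the disk, distance distortion at well-separated scales controls it at all
comparable scales. -/
theorem exists_dist_le_of_half {f : ℂ → ℂ} {H : ℝ} (hH : 0 ≤ H)
    (hf : ∀ a b c : ℂ, 1 ≤ ‖a‖ → 1 ≤ ‖b‖ → 1 ≤ ‖c‖ → dist a b ≤ dist a c / 2 →
      dist (f a) (f b) ≤ H * dist (f a) (f c)) {c : ℝ} :
    ∃ c' > (0 : ℝ), ∀ t₁ t₂ t₃ : ℂ, 1 ≤ ‖t₁‖ → 1 ≤ ‖t₂‖ → 1 ≤ ‖t₃‖ →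
      dist t₁ t₂ ≤ c * dist t₁ t₃ → dist (f t₁) (f t₂) ≤ c' * dist (f t₁) (f t₃) := by
  obtain ⟨k, hk⟩ := pow_unbounded_of_one_lt (4 * c) (Real.lt_sqrt_of_sq_lt (by norm_num :
    (1 : ℝ) ^ 2 < 2))
  refine ⟨(1 + H) ^ 2 ^ k, by positivity, fun t₁ t₂ t₃ h₁ h₂ h₃ h => ?_⟩
  have step : ∀ (k : ℕ) (a b : ℂ), 1 ≤ ‖a‖ → 1 ≤ ‖b‖ → dist a b ≤ √2 ^ k * (dist t₁ t₃ / 4) →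
      dist (f b) (f t₁) + dist (f t₁) (f t₃) ≤
        (1 + H) ^ 2 ^ k * (dist (f a) (f t₁) + dist (f t₁) (f t₃)) := by
    intro k
    induction k with
    | zero =>
      intro a b ha hb hab
      have h5 := dist_triangle_left t₁ t₃ a
      have h6 := dist_triangle (f a) (f t₁) (f t₃)
      have h7 := dist_triangle_left (f b) (f t₁) (f a)
      have h8 : dist (f a) (f b) ≤ H * (dist (f a) (f t₁) + dist (f t₁) (f t₃)) := by
        rcases le_total (dist a t₁) (dist a t₃) with h9 | h9
        · exact (hf a b t₃ ha hb h₃ (by linarith)).trans (mul_le_mul_of_nonneg_left h6 hH)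
        · exact (hf a b t₁ ha hb h₁ (by linarith)).trans
            (mul_le_mul_of_nonneg_left (by linarith [dist_nonneg (x := f t₁) (y := f t₃)]) hH)
      rw [pow_zero, pow_one]
      linarith
    | succ k ih =>
      intro a b ha hb hab
      obtain ⟨m, hm, ham, hmb⟩ := exists_one_le_norm_dist_eq ha hb
      have hs : 0 < √2 := by positivity
      rw [pow_succ, mul_right_comm] at hab
      have h5 := ih a m ha hm (le_of_mul_le_mul_right (ham.le.trans hab) hs)
      have h6 := ih m b hm hb (le_of_mul_le_mul_right (hmb.le.trans hab) hs)
      calc _ ≤ _ := h6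
        _ ≤ (1 + H) ^ 2 ^ k * ((1 + H) ^ 2 ^ k * (dist (f a) (f t₁) + dist (f t₁) (f t₃))) := by
          gcongr
        _ = _ := by rw [pow_succ 2 k]; ring
  have h5 := step k t₁ t₂ h₁ h₂ (h.trans (by
    nlinarith [mul_le_mul_of_nonneg_right hk.le (dist_nonneg (x := t₁) (y := t₃))]))
  rw [dist_self, zero_add, dist_comm (f t₂)] at h5
  linarith [dist_nonneg (x := f t₁) (y := f t₃)]

theorem norm_add_mul_sign {t : ℂ} (ht : 1 ≤ ‖t‖) {x : ℝ} (hx : 0 ≤ x) :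
    1 ≤ ‖t + (x : ℂ) * (t / ‖t‖)‖ := by
  have h0 : (‖t‖ : ℂ) ≠ 0 := by exact_mod_cast (zero_lt_one.trans_le ht).ne'
  have h1 : t + (x : ℂ) * (t / ‖t‖) = ((1 + x / ‖t‖ : ℝ) : ℂ) * t := by
    push_cast; field_simp
  have h2 : 0 ≤ x / ‖t‖ := by positivity
  rw [h1, norm_mul, Complex.norm_of_nonneg (by linarith)]
  nlinarith

/-- A map of the exterior of the disk which is weakly quasisymmetric has a weakly quasisymmetric
inverse. -/
theorem exists_dist_le_of_dist_map_le {f : ℂ → ℂ} (hi : InjOn f {w | 1 ≤ ‖w‖})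
    (hf : ∀ c : ℝ, ∃ c' > (0 : ℝ), ∀ t₁ t₂ t₃ : ℂ, 1 ≤ ‖t₁‖ → 1 ≤ ‖t₂‖ → 1 ≤ ‖t₃‖ →
      dist t₁ t₂ ≤ c * dist t₁ t₃ → dist (f t₁) (f t₂) ≤ c' * dist (f t₁) (f t₃))
    {c : ℝ} (hc : 0 < c) :
    ∃ c' > (0 : ℝ), ∀ t₁ t₂ t₃ : ℂ, 1 ≤ ‖t₁‖ → 1 ≤ ‖t₂‖ → 1 ≤ ‖t₃‖ →
      dist (f t₁) (f t₂) ≤ c * dist (f t₁) (f t₃) → dist t₁ t₂ ≤ c' * dist t₁ t₃ := by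
  obtain ⟨H₁, hH₁, hf₁⟩ := hf 1
  obtain ⟨H₂, hH₂, hf₂⟩ := hf 2
  set δ : ℝ := (c * H₁ * H₂)⁻¹ with hδ
  have hδ0 : 0 < δ := by positivity
  obtain ⟨T, -, hT, hcov⟩ := finite_cover_balls_of_compact
    (isCompact_closedBall (0 : ℂ) H₁) (half_pos hδ0)
  lift T to Finset ℂ using hT
  refine ⟨2 ^ T.card, by positivity, fun t₁ t₂ t₃ h₁ h₂ h₃ h => ?_⟩
  by_contra! hlt
  rcases eq_or_ne t₁ t₂ with rfl | h12
  · rw [dist_self] at hlt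
    exact absurd hlt (not_lt.2 (by positivity))
  set l := dist t₁ t₂ with hl
  have hl0 : 0 < l := dist_pos.2 h12
  have hL0 : 0 < dist (f t₁) (f t₂) := dist_pos.2 fun h' => h12 (hi h₁ h₂ h')
  set s : ℕ → ℂ := fun i => t₁ + ((2⁻¹ ^ i * l : ℝ) : ℂ) * (t₁ / ‖t₁‖) with hs
  have hunit : ‖t₁ / (‖t₁‖ : ℂ)‖ = 1 := by
    rw [norm_div, Complex.norm_real, norm_norm, div_self (by linarith)]
  have hs1 : ∀ i, 1 ≤ ‖s i‖ := fun i => norm_add_mul_sign h₁ (by positivity)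
  have hsd : ∀ i, dist t₁ (s i) = 2⁻¹ ^ i * l := fun i => by
    rw [dist_comm, dist_eq_norm, hs]
    simp only [add_sub_cancel_left]
    rw [norm_mul, hunit, mul_one, Complex.norm_of_nonneg (by positivity)]
  have hss : ∀ i j, i < j → dist (s i) t₁ ≤ 2 * dist (s i) (s j) := fun i j hij => by
    have h5 : (2⁻¹ : ℝ) ^ j ≤ 2⁻¹ ^ i / 2 := by
      calc (2⁻¹ : ℝ) ^ j ≤ 2⁻¹ ^ (i + 1) :=
            pow_le_pow_of_le_one (by norm_num) (by norm_num) hij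
        _ = _ := by rw [pow_succ]; ring
    have h6 := dist_triangle_right (s i) t₁ (s j)
    rw [dist_comm (s i) t₁, hsd, hsd] at h6
    rw [dist_comm (s i) t₁, hsd]
    nlinarith
  have hup : ∀ i, dist (f t₁) (f (s i)) ≤ H₁ * dist (f t₁) (f t₂) := fun i => by
    refine hf₁ _ _ _ h₁ (hs1 i) h₂ ?_
    rw [hsd, one_mul]
    exact mul_le_of_le_one_left hl0.le (pow_le_one₀ (by norm_num) (by norm_num))
  have hlow : ∀ i j, i < j → i ≤ T.card →
      δ * dist (f t₁) (f t₂) ≤ dist (f (s i)) (f (s j)) := fun i j hij hiT => by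
    have h5 : dist (f t₁) (f t₃) ≤ H₁ * dist (f t₁) (f (s i)) := by
      refine hf₁ _ _ _ h₁ h₃ (hs1 i) ?_
      rw [hsd, one_mul, inv_pow, ← div_eq_inv_mul, le_div_iff₀ (by positivity), mul_comm]
      refine (mul_le_mul_of_nonneg_right ?_ dist_nonneg).trans hlt.le
      exact pow_le_pow_right₀ one_le_two hiT
    have h6 : dist (f (s i)) (f t₁) ≤ H₂ * dist (f (s i)) (f (s j)) :=
      hf₂ _ _ _ (hs1 i) h₁ (hs1 j) (hss i j hij)
    rw [dist_comm] at h6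
    rw [hδ, inv_mul_le_iff₀ (by positivity)]
    calc dist (f t₁) (f t₂) ≤ c * (H₁ * (H₂ * dist (f (s i)) (f (s j)))) := by
          refine h.trans ?_
          gcongr
          refine h5.trans ?_
          gcongr
      _ = _ := by ring
  set L := dist (f t₁) (f t₂) with hL
  have hmem : ∀ i, ∃ x ∈ T, dist ((f (s i) - f t₁) / (L : ℂ)) x < δ / 2 := fun i => by
    have h5 : (f (s i) - f t₁) / (L : ℂ) ∈ closedBall (0 : ℂ) H₁ := by
      rw [mem_closedBall_zero_iff, norm_div, Complex.norm_of_nonneg hL0.le, ← dist_eq_norm,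
        dist_comm, div_le_iff₀ hL0]
      exact hup i
    simpa using hcov h5
  choose x hxT hx using hmem
  have hpair : ∀ i j, i < j → i ≤ T.card → x i ≠ x j := fun i j hij hiT hxx => by
    have h5 := dist_triangle_right ((f (s i) - f t₁) / (L : ℂ)) ((f (s j) - f t₁) / (L : ℂ)) (x i)
    have h6 : dist ((f (s i) - f t₁) / (L : ℂ)) ((f (s j) - f t₁) / (L : ℂ)) =
        dist (f (s i)) (f (s j)) / L := by
      rw [dist_eq_norm, ← sub_div, sub_sub_sub_cancel_right, norm_div,
        Complex.norm_of_nonneg hL0.le, dist_eq_norm]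
    have h7 := (le_div_iff₀ hL0).2 (hlow i j hij hiT)
    have h8 := hx j
    rw [← hxx] at h8
    linarith [hx i]
  obtain ⟨i, hi', j, hj', hij, hxx⟩ := Finset.exists_ne_map_eq_of_card_lt_of_maps_to
    (s := Finset.range (T.card + 1)) (t := T) (f := x) (by simp) (fun i _ => hxT i)
  rw [Finset.mem_range, Nat.lt_succ_iff] at hi' hj'
  rcases hij.lt_or_gt with h5 | h5
  exacts [hpair i j h5 hi' hxx, hpair j i h5 hj' hxx.symm]

end Distortion

/-- Lemma 3.1 (i): for points `z₁,z₂,z₃` in the closure of `Ω` with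
`t_j = Φ(z_j)`, the conditions `|z₁-z₂| ≲ |z₁-z₃|` and `|t₁-t₂| ≲ |t₁-t₃|` are equivalent:
for every `c > 0` there is `c' = c'(Γ,c) > 0` such that each implies the other with
constant `c'`. -/
theorem conformal_distortion_equiv
    (Γ : Set ℂ) (Λ : ℝ) (hΓJ : IsJordanCurve Γ) (hΓq : IsQuasismooth Γ Λ)
    (Φ : ℂ → ℂ) (hΦ : IsExtConformalClosure (unboundedComponent Γ) Φ) :
    ∀ c > (0:ℝ), ∃ c' > (0:ℝ), ∀ z₁ z₂ z₃ : ℂ,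
      z₁ ∈ closure (unboundedComponent Γ) → z₂ ∈ closure (unboundedComponent Γ) →
      z₃ ∈ closure (unboundedComponent Γ) →
      (dist z₁ z₂ ≤ c * dist z₁ z₃ → dist (Φ z₁) (Φ z₂) ≤ c' * dist (Φ z₁) (Φ z₃)) ∧
      (dist (Φ z₁) (Φ z₂) ≤ c * dist (Φ z₁) (Φ z₃) → dist z₁ z₂ ≤ c' * dist z₁ z₃) := by
  intro c hc
  have hinv := leftInvOn_extInverse hΦ
  have hf : ∀ c : ℝ, ∃ c' > (0 : ℝ), ∀ t₁ t₂ t₃ : ℂ, 1 ≤ ‖t₁‖ → 1 ≤ ‖t₂‖ → 1 ≤ ‖t₃‖ →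
      dist t₁ t₂ ≤ c * dist t₁ t₃ → dist (extInverse Γ Φ t₁) (extInverse Γ Φ t₂) ≤
        c' * dist (extInverse Γ Φ t₁) (extInverse Γ Φ t₃) := fun c =>
    exists_dist_le_of_half (by positivity) fun t₁ t₂ t₃ h₁ h₂ h₃ h =>
      hΦ.dist_le_of_dist_map_le hΓJ hΓq (mapsTo_extInverse hΦ h₁) (mapsTo_extInverse hΦ h₂)
        (mapsTo_extInverse hΦ h₃) (by
          rwa [rightInvOn_extInverse hΦ h₁, rightInvOn_extInverse hΦ h₂,
            rightInvOn_extInverse hΦ h₃])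
  obtain ⟨c₁, hc₁, H₁⟩ := exists_dist_le_of_dist_map_le (injOn_extInverse hΦ) hf hc
  obtain ⟨c₂, -, H₂⟩ := hf c
  refine ⟨max c₁ c₂, lt_max_of_lt_left hc₁, fun z₁ z₂ z₃ h₁ h₂ h₃ => ?_⟩
  have ht : ∀ z ∈ closure (unboundedComponent Γ), 1 ≤ ‖Φ z‖ := fun z hz => hΦ.2.2.mapsTo hz
  have H₁' := H₁ _ _ _ (ht z₁ h₁) (ht z₂ h₂) (ht z₃ h₃)
  have H₂' := H₂ _ _ _ (ht z₁ h₁) (ht z₂ h₂) (ht z₃ h₃)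
  rw [hinv h₁, hinv h₂, hinv h₃] at H₁' H₂'
  exact ⟨fun h => (H₁' h).trans (mul_le_mul_of_nonneg_right (le_max_left _ _) dist_nonneg),
    fun h => (H₂' h).trans (mul_le_mul_of_nonneg_right (le_max_right _ _) dist_nonneg)⟩
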